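/- arXiv:1709.08894 — 7 statements merged into one kernel-verified Lean document; each statement's English description precedes it below -/
import Mathlib

section
/- Let μ and ν be two probability measures on ℝⁿ (with the Euclidean norm) such that ∫‖x‖ dμ(x) < ∞ and ∫‖x‖ dν(x) < ∞. Then the infimum over all couplings π of μ and ν of ∫ ‖x−y‖ dπ(x,y) is attained, the supremum over all 1-Lipschitz functions f : ℝⁿ → ℝ of ∫ f dμ − ∫ f dν is attained, and the two optimal values are equal. -/
open MeasureTheory

def LG {X : Type*} [MeasurableSpace X] (μ ν : Measure X) : Submodule ℝ (X × X → ℝ) where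
  carrier := {h | ∃ a b : X → ℝ, Integrable a μ ∧ Integrable b ν ∧
    ∀ x y, |h (x, y)| ≤ a x + b y}
  zero_mem' := ⟨0, 0, integrable_zero _ _ _, integrable_zero _ _ _, by simp⟩
  add_mem' := by
    rintro h k ⟨a, b, ha, hb, H⟩ ⟨a', b', ha', hb', H'⟩
    refine ⟨a + a', b + b', ha.add ha', hb.add hb', fun x y => ?_⟩
    have := abs_add_le (h (x, y)) (k (x, y))
    have := H x y
    have := H' x y
    simp only [Pi.add_apply]
    linarith
  smul_mem' := by
    rintro c h ⟨a, b, ha, hb, H⟩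
    refine ⟨fun x => |c| * a x, fun x => |c| * b x, ha.const_mul _, hb.const_mul _, fun x y => ?_⟩
    simp only [Pi.smul_apply, smul_eq_mul, abs_mul, ← mul_add]
    exact mul_le_mul_of_nonneg_left (H x y) (abs_nonneg c)

theorem hb_lemma {X : Type*} [MeasurableSpace X] (μ ν : Measure X) (c : X × X → ℝ)
    (hc : c ∈ LG μ ν) (B : ℝ)
    (hB : ∀ (φ ψ : X → ℝ) (t : ℝ), Integrable φ μ → Integrable ψ ν → 0 ≤ t →
      (∀ x y, 0 ≤ φ x + ψ y + t * c (x, y)) → 0 ≤ ∫ x, φ x ∂μ + ∫ x, ψ x ∂ν + t * B) :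
    ∃ Λ : (X × X → ℝ) →ₗ[ℝ] ℝ, Λ c ≤ B ∧ ∀ h ∈ LG μ ν, ∀ φ ψ : X → ℝ, Integrable φ μ →
      Integrable ψ ν → (∀ x y, h (x, y) ≤ φ x + ψ y) → Λ h ≤ ∫ x, φ x ∂μ + ∫ x, ψ x ∂ν := by
  let S : (X × X → ℝ) → Set ℝ := fun h => {r | ∃ (φ ψ : X → ℝ) (t : ℝ), Integrable φ μ ∧
    Integrable ψ ν ∧ 0 ≤ t ∧ (∀ x y, h (x, y) ≤ φ x + ψ y + t * c (x, y)) ∧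
    r = ∫ x, φ x ∂μ + ∫ x, ψ x ∂ν + t * B}
  have hbdd : ∀ h ∈ LG μ ν, BddBelow (S h) := by
    rintro h ⟨a, b, ha, hb, H⟩
    refine ⟨-(∫ x, a x ∂μ + ∫ x, b x ∂ν), ?_⟩
    rintro r ⟨φ, ψ, t, hφ, hψ, ht, hh, rfl⟩
    have := hB (fun x => φ x + a x) (fun x => ψ x + b x) t (hφ.add ha) (hψ.add hb) ht ?_
    · rw [integral_add hφ ha, integral_add hψ hb] at this
      linarith
    · intro x y
      have := hh x y
      have := neg_le_of_abs_le (H x y)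
      linarith
  have hne : ∀ h ∈ LG μ ν, (S h).Nonempty := by
    rintro h ⟨a, b, ha, hb, H⟩
    refine ⟨_, a, b, 0, ha, hb, le_rfl, fun x y => ?_, rfl⟩
    have := le_of_abs_le (H x y)
    linarith
  have hsm : ∀ h, ∀ s : ℝ, 0 < s → ∀ r ∈ S h, s * r ∈ S (s • h) := by
    rintro h s hs r ⟨φ, ψ, t, hφ, hψ, ht, hh, rfl⟩
    refine ⟨fun x => s * φ x, fun x => s * ψ x, s * t, hφ.const_mul _, hψ.const_mul _,
      by positivity, fun x y => ?_, ?_⟩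
    · have := mul_le_mul_of_nonneg_left (hh x y) hs.le
      simp only [Pi.smul_apply, smul_eq_mul]
      linarith
    · rw [integral_const_mul, integral_const_mul]; ring
  have hsle : ∀ h ∈ LG μ ν, ∀ s : ℝ, 0 < s → sInf (S (s • h)) ≤ s * sInf (S h) := by
    intro h hh s hs
    rw [← div_le_iff₀' hs]
    refine le_csInf (hne h hh) fun r hr => ?_
    rw [div_le_iff₀' hs]
    exact csInf_le (hbdd _ (Submodule.smul_mem _ _ hh)) (hsm h s hs r hr)
  have N1 : ∀ s : ℝ, 0 < s → ∀ h : LG μ ν, sInf (S (s • h : LG μ ν)) = s * sInf (S h) := by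
    rintro s hs ⟨h, hh⟩
    refine le_antisymm (hsle h hh s hs) ?_
    have := hsle (s • h) (Submodule.smul_mem _ _ hh) s⁻¹ (inv_pos.2 hs)
    rw [smul_smul, inv_mul_cancel₀ hs.ne', one_smul, ← div_eq_inv_mul, le_div_iff₀' hs] at this
    exact this
  have N2 : ∀ h k : LG μ ν, sInf (S (h + k : LG μ ν)) ≤ sInf (S h) + sInf (S k) := by
    rintro ⟨h, hh⟩ ⟨k, hk⟩
    change sInf (S (h + k)) ≤ sInf (S h) + sInf (S k)
    rw [← sub_le_iff_le_add]
    refine le_csInf (hne h hh) fun r hr => ?_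
    rw [sub_le_comm]
    refine le_csInf (hne k hk) fun q hq => ?_
    rw [sub_le_iff_le_add]
    refine csInf_le (hbdd _ (Submodule.add_mem _ hh hk)) ?_
    obtain ⟨φ, ψ, t, hφ, hψ, ht, hh, rfl⟩ := hr
    obtain ⟨φ', ψ', t', hφ', hψ', ht', hh', rfl⟩ := hq
    refine ⟨fun x => φ x + φ' x, fun x => ψ x + ψ' x, t + t', hφ.add hφ', hψ.add hψ',
      by positivity, fun x y => ?_, ?_⟩
    · have := hh x y
      have := hh' x y
      simp only [Pi.add_apply]
      linarith
    · rw [integral_add hφ hφ', integral_add hψ hψ']; ring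
  have N3 : ∀ x : (⊥ : LG μ ν →ₗ.[ℝ] ℝ).domain, (⊥ : LG μ ν →ₗ.[ℝ] ℝ) x ≤ sInf (S x) := by
    rintro ⟨x, hx⟩
    have hx0 : x = 0 := (Submodule.mem_bot ℝ).1 hx
    subst hx0
    have : (⊥ : LG μ ν →ₗ.[ℝ] ℝ) ⟨0, hx⟩ = 0 := LinearPMap.map_zero _
    rw [this]
    refine le_csInf (hne _ (Submodule.zero_mem _)) ?_
    rintro r ⟨φ, ψ, t, hφ, hψ, ht, hh, rfl⟩
    exact hB φ ψ t hφ hψ ht (by simpa using hh)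
  obtain ⟨g, -, hg⟩ := exists_extension_of_le_sublinear (E := LG μ ν) ⊥
    (fun h => sInf (S h)) N1 N2 N3
  obtain ⟨Λ, hΛ⟩ := g.exists_extend
  have hΛ' : ∀ h (hh : h ∈ LG μ ν), Λ h = g ⟨h, hh⟩ := fun h hh => by rw [← hΛ]; rfl
  refine ⟨Λ, ?_, ?_⟩
  · rw [hΛ' c hc]
    refine (hg _).trans (csInf_le (hbdd c hc) ⟨0, 0, 1, integrable_zero _ _ _,
      integrable_zero _ _ _, zero_le_one, by simp, by simp⟩)
  · intro h hh φ ψ hφ hψ H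
    rw [hΛ' h hh]
    exact (hg _).trans (csInf_le (hbdd h hh) ⟨φ, ψ, 0, hφ, hψ, le_rfl, by simpa using H, by simp⟩)

theorem lip_int {E : Type*} [NormedAddCommGroup E] [ProperSpace E] [MeasurableSpace E]
    [BorelSpace E] (μ : Measure E) [IsProbabilityMeasure μ] (hμ : Integrable (fun x => ‖x‖) μ)
    (g : E → ℝ) (hg : LipschitzWith 1 g) : Integrable g μ := by
  refine Integrable.mono' (g := fun x => ‖x‖ + |g 0|) (hμ.add (integrable_const _))
    hg.continuous.aestronglyMeasurable (Filter.Eventually.of_forall fun x => ?_)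
  have := hg.dist_le_mul x 0
  simp only [Real.dist_eq, dist_zero_right, NNReal.coe_one, one_mul] at this
  have h2 := abs_add_le (g x - g 0) (g 0)
  simp only [sub_add_cancel] at h2
  rw [Real.norm_eq_abs]; linarith

theorem lip_tendsto {E : Type*} [NormedAddCommGroup E] [ProperSpace E] [MeasurableSpace E]
    [BorelSpace E] (μ : Measure E) [IsProbabilityMeasure μ] (hμ : Integrable (fun x => ‖x‖) μ)
    (g : ℕ → E → ℝ) (f : E → ℝ) (hg : ∀ k, LipschitzWith 1 (g k)) (h0 : ∀ k, g k 0 = 0)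
    (hlim : ∀ x, Filter.Tendsto (fun k => g k x) Filter.atTop (nhds (f x))) :
    Filter.Tendsto (fun k => ∫ x, g k x ∂μ) Filter.atTop (nhds (∫ x, f x ∂μ)) := by
  refine tendsto_integral_of_dominated_convergence (fun x => ‖x‖)
    (fun k => (hg k).continuous.aestronglyMeasurable) hμ
    (fun k => Filter.Eventually.of_forall fun x => ?_) (Filter.Eventually.of_forall hlim)
  have := (hg k).dist_le_mul x 0
  simpa [Real.dist_eq, h0 k] using this

/-- compactness -/
theorem lip_subseq {E : Type*} [NormedAddCommGroup E] [ProperSpace E]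
    (g : ℕ → E → ℝ) (hg : ∀ k, LipschitzWith 1 (g k)) (h0 : ∀ k, g k 0 = 0) :
    ∃ (f : E → ℝ) (s : ℕ → ℕ), LipschitzWith 1 f ∧ StrictMono s ∧
      ∀ x, Filter.Tendsto (fun k => g (s k) x) Filter.atTop (nhds (f x)) := by
  have hK : IsCompact (Set.univ.pi fun i : ℕ =>
      Set.Icc (-‖TopologicalSpace.denseSeq E i‖) (‖TopologicalSpace.denseSeq E i‖)) :=
    isCompact_univ_pi fun i => isCompact_Icc
  obtain ⟨w, -, s, hs, hw⟩ := hK.tendsto_subseq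
    (x := fun k i => g k (TopologicalSpace.denseSeq E i)) (by
      intro k i _
      have := (hg k).dist_le_mul (TopologicalSpace.denseSeq E i) 0
      simp only [Real.dist_eq, h0 k, sub_zero, dist_zero_right, NNReal.coe_one, one_mul] at this
      exact abs_le.1 this)
  rw [tendsto_pi_nhds] at hw
  have hc : ∀ x, ∃ l, Filter.Tendsto (fun k => g (s k) x) Filter.atTop (nhds l) := by
    intro x
    apply cauchySeq_tendsto_of_complete
    rw [Metric.cauchySeq_iff]
    intro ε hε
    obtain ⟨i, hi⟩ := (TopologicalSpace.denseRange_denseSeq E).exists_dist_lt x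
      (show 0 < ε / 3 by positivity)
    obtain ⟨N, hN⟩ := Metric.cauchySeq_iff.1 (hw i).cauchySeq (ε / 3) (by positivity)
    refine ⟨N, fun m hm n hn => ?_⟩
    have h1 := hN m hm n hn
    have h2 := (hg (s m)).dist_le_mul x (TopologicalSpace.denseSeq E i)
    have h3 := (hg (s n)).dist_le_mul x (TopologicalSpace.denseSeq E i)
    simp only [Function.comp, NNReal.coe_one, one_mul] at h1 h2 h3
    rw [dist_comm] at h3
    have := dist_triangle4 (g (s m) x) (g (s m) (TopologicalSpace.denseSeq E i))
      (g (s n) (TopologicalSpace.denseSeq E i)) (g (s n) x)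
    linarith
  choose f hf using hc
  refine ⟨f, s, ?_, hs, hf⟩
  refine LipschitzWith.of_dist_le_mul fun x y => ?_
  exact le_of_tendsto' ((hf x).dist (hf y)) fun k => (hg (s k)).dist_le_mul x y

theorem dual_attained {E : Type*} [NormedAddCommGroup E] [ProperSpace E] [MeasurableSpace E]
    [BorelSpace E] (μ ν : Measure E) [IsProbabilityMeasure μ] [IsProbabilityMeasure ν]
    (hμ : Integrable (fun x => ‖x‖) μ) (hν : Integrable (fun x => ‖x‖) ν) :
    ∃ f : E → ℝ, LipschitzWith 1 f ∧ ∀ g : E → ℝ, LipschitzWith 1 g →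
      ∫ x, g x ∂μ - ∫ x, g x ∂ν ≤ ∫ x, f x ∂μ - ∫ x, f x ∂ν := by
  let S : Set ℝ := {r | ∃ g : E → ℝ, LipschitzWith 1 g ∧ g 0 = 0 ∧
    r = ∫ x, g x ∂μ - ∫ x, g x ∂ν}
  have hS : S.Nonempty := ⟨_, 0, LipschitzWith.const' 0, rfl, rfl⟩
  have hb : BddAbove S := by
    refine ⟨∫ x, ‖x‖ ∂μ + ∫ x, ‖x‖ ∂ν, ?_⟩
    rintro r ⟨g, hg, h0, rfl⟩
    have hx : ∀ x, |g x| ≤ ‖x‖ := fun x => by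
      simpa [Real.dist_eq, h0] using hg.dist_le_mul x 0
    have h1 := integral_mono (lip_int μ hμ g hg) hμ fun x => le_of_abs_le (hx x)
    have h2 := integral_mono hν.neg (lip_int ν hν g hg) fun x => neg_le_of_abs_le (hx x)
    simp only [Pi.neg_apply, integral_neg] at h2
    linarith
  obtain ⟨u, -, hu, huS⟩ := exists_seq_tendsto_sSup hS hb
  choose g hg h0 hr using huS
  obtain ⟨f, s, hf, hs, hlim⟩ := lip_subseq g hg h0
  refine ⟨f, hf, fun k hk => ?_⟩
  have e : ∫ x, f x ∂μ - ∫ x, f x ∂ν = sSup S := by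
    refine tendsto_nhds_unique ?_ (hu.comp hs.tendsto_atTop)
    have := (lip_tendsto μ hμ (fun k => g (s k)) f (fun k => hg _) (fun k => h0 _) hlim).sub
      (lip_tendsto ν hν (fun k => g (s k)) f (fun k => hg _) (fun k => h0 _) hlim)
    refine this.congr fun k => ?_
    exact (hr (s k)).symm
  rw [e]
  refine le_csSup hb ⟨fun x => k x - k 0, ?_, by simp, ?_⟩
  · refine LipschitzWith.of_dist_le_mul fun x y => ?_
    simpa using hk.dist_le_mul x y
  · rw [integral_sub (lip_int μ hμ k hk) (integrable_const _),
      integral_sub (lip_int ν hν k hk) (integrable_const _)]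
    simp

theorem ineq0 {E : Type*} [MeasurableSpace E] (μ ν : Measure E)
    [IsProbabilityMeasure μ] [IsProbabilityMeasure ν] (φ ψ : E → ℝ) (hφ : Integrable φ μ)
    (hψ : Integrable ψ ν) (h : ∀ x y, 0 ≤ φ x + ψ y) : 0 ≤ ∫ x, φ x ∂μ + ∫ x, ψ x ∂ν := by
  have h1 : ∀ y, 0 ≤ ∫ x, φ x ∂μ + ψ y := fun y => by
    have := integral_nonneg (μ := μ) (f := fun x => φ x + ψ y) (fun x => h x y)
    rw [integral_add hφ (integrable_const _)] at this
    simpa using this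
  have := integral_nonneg (μ := ν) (f := fun y => ∫ x, φ x ∂μ + ψ y) h1
  rw [integral_add (integrable_const _) hψ] at this
  simpa using this

theorem dual_ineq {E : Type*} [NormedAddCommGroup E] [ProperSpace E] [MeasurableSpace E]
    [BorelSpace E] (μ ν : Measure E) [IsProbabilityMeasure μ] [IsProbabilityMeasure ν]
    (hμ : Integrable (fun x => ‖x‖) μ) (hν : Integrable (fun x => ‖x‖) ν) (B : ℝ)
    (hB : ∀ g : E → ℝ, LipschitzWith 1 g → ∫ x, g x ∂μ - ∫ x, g x ∂ν ≤ B)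
    (φ ψ : E → ℝ) (t : ℝ) (hφ : Integrable φ μ) (hψ : Integrable ψ ν) (ht : 0 ≤ t)
    (h : ∀ x y, 0 ≤ φ x + ψ y + t * ‖x - y‖) :
    0 ≤ ∫ x, φ x ∂μ + ∫ x, ψ x ∂ν + t * B := by
  rcases ht.eq_or_lt with rfl | ht
  · simpa using ineq0 μ ν φ ψ hφ hψ (by simpa using h)
  have key : ∀ x y, -(φ x / t) ≤ ‖x - y‖ + ψ y / t := fun x y => by
    have := div_nonneg (h x y) ht.le
    rw [add_div, add_div, mul_div_cancel_left₀ _ ht.ne'] at this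
    linarith
  let g : E → ℝ := fun x => ⨅ y, (‖x - y‖ + ψ y / t)
  have hbd : ∀ x, BddBelow (Set.range fun y => ‖x - y‖ + ψ y / t) := fun x =>
    ⟨-(φ x / t), by rintro _ ⟨y, rfl⟩; exact key x y⟩
  have hg : LipschitzWith 1 g := by
    refine LipschitzWith.of_le_add fun x y => ?_
    rw [← sub_le_iff_le_add]
    refine le_ciInf fun z => ?_
    rw [sub_le_iff_le_add]
    refine (ciInf_le (hbd x) z).trans ?_
    have := norm_sub_le_norm_sub_add_norm_sub x y z
    rw [dist_eq_norm]
    linarith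
  have h1 : ∀ x, -(φ x / t) ≤ g x := fun x => le_ciInf fun y => key x y
  have h2 : ∀ x, g x ≤ ψ x / t := fun x => (ciInf_le (hbd x) x).trans (by simp)
  have h3 := integral_mono (hφ.div_const t).neg (lip_int μ hμ g hg) h1
  have h4 := integral_mono (lip_int ν hν g hg) (hψ.div_const t) h2
  simp only [Pi.neg_apply, integral_neg, integral_div] at h3 h4
  have h5 := hB g hg
  have h6 : 0 ≤ t * ((∫ x, φ x ∂μ) / t + (∫ x, ψ x ∂ν) / t + B) :=
    mul_nonneg ht.le (by linarith)
  rw [mul_add, mul_add, mul_div_cancel₀ _ ht.ne', mul_div_cancel₀ _ ht.ne'] at h6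
  exact h6

section riesz
open CompactlySupported

noncomputable def cut {E : Type*} [NormedAddCommGroup E] (k : ℕ) (p : E × E) : ℝ :=
  max 0 (1 - ‖p‖ / (k + 1))

theorem cut_nonneg {E : Type*} [NormedAddCommGroup E] (k : ℕ) (p : E × E) : 0 ≤ cut k p :=
  le_max_left _ _

theorem cut_le_one {E : Type*} [NormedAddCommGroup E] (k : ℕ) (p : E × E) : cut k p ≤ 1 :=
  max_le zero_le_one (sub_le_self _ (by positivity))

theorem cut_ge {E : Type*} [NormedAddCommGroup E] (k : ℕ) (x y : E) :
    1 - cut k (x, y) ≤ ‖x‖ / (k + 1) + ‖y‖ / (k + 1) := by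
  have h1 : 1 - ‖(x, y)‖ / (k + 1) ≤ cut k (x, y) := le_max_right _ _
  have h2 : ‖(x, y)‖ ≤ ‖x‖ + ‖y‖ := by
    rw [Prod.norm_mk]
    exact max_le_add_of_nonneg (norm_nonneg _) (norm_nonneg _)
  have h3 : ‖(x, y)‖ / (k + 1 : ℝ) ≤ (‖x‖ + ‖y‖) / (k + 1) := by gcongr
  rw [add_div] at h3
  linarith

theorem cut_cont {E : Type*} [NormedAddCommGroup E] (k : ℕ) :
    Continuous (cut k : E × E → ℝ) := by
  unfold cut; fun_prop

theorem cut_tendsto {E : Type*} [NormedAddCommGroup E] (p : E × E) :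
    Filter.Tendsto (fun k => cut k p) Filter.atTop (nhds 1) := by
  have h : Filter.Tendsto (fun k : ℕ => max 0 (1 - ‖p‖ / ((k : ℝ) + 1))) Filter.atTop
      (nhds (max 0 (1 - 0))) :=
    tendsto_const_nhds.max (tendsto_const_nhds.sub
      (tendsto_const_nhds.div_atTop
        (Filter.tendsto_atTop_add_const_right _ _ tendsto_natCast_atTop_atTop)))
  simpa [cut] using h

theorem cut_supp {E : Type*} [NormedAddCommGroup E] [ProperSpace E] (k : ℕ) :
    HasCompactSupport (cut k : E × E → ℝ) := by
  refine HasCompactSupport.intro (isCompact_closedBall (0 : E × E) (k + 1)) fun p hp => ?_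
  rw [mem_closedBall_zero_iff, not_le] at hp
  refine max_eq_left ?_
  have : 1 ≤ ‖p‖ / (k + 1 : ℝ) := by rw [one_le_div (by positivity)]; exact hp.le
  linarith

theorem coupling_of_functional {E : Type*} [NormedAddCommGroup E] [ProperSpace E]
    [MeasurableSpace E] [BorelSpace E] (μ ν : Measure E)
    [IsProbabilityMeasure μ] [IsProbabilityMeasure ν]
    (hμ : Integrable (fun x => ‖x‖) μ) (hν : Integrable (fun x => ‖x‖) ν)
    (Λ : (E × E → ℝ) →ₗ[ℝ] ℝ)
    (hΛ : ∀ h ∈ LG μ ν, ∀ φ ψ : E → ℝ, Integrable φ μ →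
      Integrable ψ ν → (∀ x y, h (x, y) ≤ φ x + ψ y) → Λ h ≤ ∫ x, φ x ∂μ + ∫ x, ψ x ∂ν) :
    ∃ π : Measure (E × E), IsProbabilityMeasure π ∧ π.map Prod.fst = μ ∧ π.map Prod.snd = ν ∧
      ∀ h : E × E → ℝ, h ∈ LG μ ν → Continuous h → (∀ p, 0 ≤ h p) →
        ∫⁻ p, ENNReal.ofReal (h p) ∂π ≤ ENNReal.ofReal (Λ h) := by
  -- bounded functions are in the space
  have hbdd : ∀ h : E × E → ℝ, ∀ C, (∀ p, |h p| ≤ C) → h ∈ LG μ ν := fun h C hC =>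
    ⟨fun _ => C, fun _ => 0, integrable_const _, integrable_const _, fun x y => by
      simpa using hC (x, y)⟩
  have hmono : ∀ h ∈ LG μ ν, ∀ k ∈ LG μ ν, (∀ p, h p ≤ k p) → Λ h ≤ Λ k := by
    intro h hh k hk hle
    have := hΛ (h - k) (Submodule.sub_mem _ hh hk) (fun _ => 0) (fun _ => 0)
      (integrable_const _) (integrable_const _) (fun x y => by simpa using hle (x, y))
    simp only [map_sub, integral_zero] at this
    linarith
  have hcc : ∀ g : C_c(E × E, ℝ), (g : E × E → ℝ) ∈ LG μ ν := fun g => by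
    obtain ⟨C, hC⟩ := g.hasCompactSupport.exists_bound_of_continuous g.continuous
    exact hbdd _ C hC
  let Λ' : C_c(E × E, ℝ) →ₚ[ℝ] ℝ :=
  { toFun := fun g => Λ g
    map_add' := fun g g' => by rw [CompactlySupportedContinuousMap.coe_add, map_add]
    map_smul' := fun c g => by rw [CompactlySupportedContinuousMap.coe_smul, map_smul]; rfl
    monotone' := fun g g' hgg' => hmono _ (hcc g) _ (hcc g') hgg' }
  let π := RealRMK.rieszMeasure Λ'
  have hπ : ∀ g : C_c(E × E, ℝ), ∫ p, g p ∂π = Λ g := fun g => RealRMK.integral_rieszMeasure Λ' g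
  let G : (h : E × E → ℝ) → Continuous h → ℕ → C_c(E × E, ℝ) := fun h hc k =>
  { toFun := fun p => h p * cut k p
    continuous_toFun := hc.mul (cut_cont k)
    hasCompactSupport' := (cut_supp k).mul_left }
  have hG : ∀ h hc k p, G h hc k p = h p * cut k p := fun h hc k p => rfl
  have hGlim : ∀ h hc p, Filter.Tendsto (fun k => G h hc k p) Filter.atTop (nhds (h p)) := by
    intro h hc p
    simpa [hG] using (cut_tendsto p).const_mul (h p)
  have hfat : ∀ h : E × E → ℝ, h ∈ LG μ ν → Continuous h → (∀ p, 0 ≤ h p) →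
        ∫⁻ p, ENNReal.ofReal (h p) ∂π ≤ ENNReal.ofReal (Λ h) := by
    intro h hh hc h0
    have h1 : ∀ k, ∫⁻ p, ENNReal.ofReal (G h hc k p) ∂π ≤ ENNReal.ofReal (Λ h) := by
      intro k
      rw [← ofReal_integral_eq_lintegral_ofReal (f := fun p => G h hc k p)
        ((G h hc k).continuous.integrable_of_hasCompactSupport (G h hc k).hasCompactSupport)
        (Filter.Eventually.of_forall fun p => mul_nonneg (h0 p) (cut_nonneg k p)), hπ]
      refine ENNReal.ofReal_le_ofReal (hmono _ (hcc _) _ hh fun p => ?_)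
      exact mul_le_of_le_one_right (h0 p) (cut_le_one k p)
    calc ∫⁻ p, ENNReal.ofReal (h p) ∂π
        = ∫⁻ p, Filter.liminf (fun k => ENNReal.ofReal (G h hc k p)) Filter.atTop ∂π := by
          refine lintegral_congr fun p => ?_
          exact ((ENNReal.tendsto_ofReal (hGlim h hc p)).liminf_eq).symm
      _ ≤ Filter.liminf (fun k => ∫⁻ p, ENNReal.ofReal (G h hc k p) ∂π) Filter.atTop :=
          lintegral_liminf_le fun k => (G h hc k).continuous.measurable.ennreal_ofReal
      _ ≤ ENNReal.ofReal (Λ h) := by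
          refine Filter.liminf_le_of_le (by isBoundedDefault) fun b hb => ?_
          obtain ⟨k, hk⟩ := hb.exists
          exact hk.trans (h1 k)
  have hfin : IsFiniteMeasure π := by
    have := hfat (fun _ => 1) (hbdd _ 1 (by simp)) continuous_const (fun _ => zero_le_one)
    simp only [ENNReal.ofReal_one, lintegral_const, one_mul] at this
    exact ⟨this.trans_lt ENNReal.ofReal_lt_top⟩
  -- integrals of bounded continuous functions
  have hint : ∀ h : E × E → ℝ, Continuous h → ∀ C, (∀ p, |h p| ≤ C) → ∫ p, h p ∂π = Λ h := by
    intro h hc C hC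
    have hC0 : 0 ≤ C := (abs_nonneg _).trans (hC 0)
    have t1 : Filter.Tendsto (fun k => ∫ p, G h hc k p ∂π) Filter.atTop
        (nhds (∫ p, h p ∂π)) := by
      refine tendsto_integral_of_dominated_convergence (fun _ => C)
        (fun k => (G h hc k).continuous.aestronglyMeasurable) (integrable_const _)
        (fun k => Filter.Eventually.of_forall fun p => ?_)
        (Filter.Eventually.of_forall (hGlim h hc))
      rw [hG h hc k p, norm_mul, Real.norm_eq_abs, Real.norm_eq_abs, abs_of_nonneg (cut_nonneg k p)]
      exact (mul_le_of_le_one_right (abs_nonneg _) (cut_le_one k p)).trans (hC p)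
    have hdiff : ∀ k : ℕ, ∀ h' : E × E → ℝ, (∀ p, |h' p| ≤ C * (1 - cut k p)) →
        Λ h' ≤ C * (∫ x, ‖x‖ ∂μ + ∫ x, ‖x‖ ∂ν) / (k + 1) := by
      intro k h' hh'
      have := hΛ h' (hbdd h' C fun p => (hh' p).trans
          (mul_le_of_le_one_right hC0 (by linarith [cut_nonneg k p])))
        (fun x => C * (‖x‖ / (k + 1))) (fun x => C * (‖x‖ / (k + 1)))
        ((hμ.div_const _).const_mul _) ((hν.div_const _).const_mul _) (fun x y => by
          rw [← mul_add]
          exact (le_of_abs_le (hh' _)).trans (mul_le_mul_of_nonneg_left (cut_ge k x y) hC0))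
      refine this.trans_eq ?_
      rw [integral_const_mul, integral_const_mul, integral_div, integral_div]
      ring
    have t2 : Filter.Tendsto (fun k => Λ (G h hc k)) Filter.atTop (nhds (Λ h)) := by
      rw [tendsto_iff_dist_tendsto_zero]
      refine squeeze_zero (fun _ => dist_nonneg)
        (g := fun k : ℕ => C * (∫ x, ‖x‖ ∂μ + ∫ x, ‖x‖ ∂ν) / ((k : ℝ) + 1)) (fun k => ?_)
        (tendsto_const_nhds.div_atTop
          (Filter.tendsto_atTop_add_const_right _ _ tendsto_natCast_atTop_atTop))
      have hb : ∀ p, |h p - G h hc k p| ≤ C * (1 - cut k p) := fun p => by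
        rw [hG h hc k p, show h p - h p * cut k p = h p * (1 - cut k p) by ring, abs_mul,
          abs_of_nonneg (sub_nonneg.2 (cut_le_one k p))]
        exact mul_le_mul_of_nonneg_right (hC p) (sub_nonneg.2 (cut_le_one k p))
      rw [Real.dist_eq, abs_le']
      constructor
      · rw [← map_sub]
        exact hdiff k _ fun p => by rw [Pi.sub_apply, abs_sub_comm]; exact hb p
      · rw [neg_sub, ← map_sub]
        exact hdiff k _ hb
    refine tendsto_nhds_unique t1 (t2.congr fun k => (hπ _).symm)
  have hfst : ∀ φ ψ : E → ℝ, Integrable φ μ → Integrable ψ ν →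
      (fun p : E × E => φ p.1 + ψ p.2) ∈ LG μ ν →
      Λ (fun p => φ p.1 + ψ p.2) = ∫ x, φ x ∂μ + ∫ x, ψ x ∂ν := by
    intro φ ψ hφ hψ hm
    refine le_antisymm (hΛ _ hm φ ψ hφ hψ fun x y => le_rfl) ?_
    have := hΛ _ (Submodule.neg_mem _ hm) (fun x => - φ x) (fun x => - ψ x) hφ.neg hψ.neg
      (fun x y => by simp [add_comm])
    rw [map_neg, integral_neg, integral_neg] at this
    linarith
  have m1 : π.map Prod.fst = μ := by
    refine ext_of_forall_integral_eq_of_IsFiniteMeasure fun f => ?_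
    have hb : ∀ p : E × E, |f p.1| ≤ ‖f‖ := fun p => f.norm_coe_le_norm p.1
    rw [integral_map measurable_fst.aemeasurable f.continuous.aestronglyMeasurable,
      hint (fun p => f p.1) (f.continuous.comp continuous_fst) ‖f‖ hb]
    have := hfst f (fun _ => 0) (f.integrable μ) (integrable_const _)
      (hbdd _ ‖f‖ (by simpa using hb))
    simpa using this
  have m2 : π.map Prod.snd = ν := by
    refine ext_of_forall_integral_eq_of_IsFiniteMeasure fun f => ?_
    have hb : ∀ p : E × E, |f p.2| ≤ ‖f‖ := fun p => f.norm_coe_le_norm p.2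
    rw [integral_map measurable_snd.aemeasurable f.continuous.aestronglyMeasurable,
      hint (fun p => f p.2) (f.continuous.comp continuous_snd) ‖f‖ hb]
    have := hfst (fun _ => 0) f (integrable_const _) (f.integrable ν)
      (hbdd _ ‖f‖ (by simpa using hb))
    simpa using this
  refine ⟨π, ?_, m1, m2, hfat⟩
  constructor
  have : π.map Prod.fst Set.univ = 1 := by rw [m1]; exact measure_univ
  rwa [Measure.map_apply measurable_fst MeasurableSet.univ, Set.preimage_univ] at this

end riesz

theorem weak_duality {E : Type*} [NormedAddCommGroup E] [ProperSpace E]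
    [MeasurableSpace E] [BorelSpace E] (μ ν : Measure E)
    [IsProbabilityMeasure μ] [IsProbabilityMeasure ν]
    (hμ : Integrable (fun x => ‖x‖) μ) (hν : Integrable (fun x => ‖x‖) ν)
    (π : Measure (E × E)) (m1 : π.map Prod.fst = μ) (m2 : π.map Prod.snd = ν)
    (g : E → ℝ) (hg : LipschitzWith 1 g) :
    ∫ x, g x ∂μ - ∫ x, g x ∂ν ≤ ∫ p, ‖p.1 - p.2‖ ∂π := by
  have i1 : ∀ f : E → ℝ, Integrable f μ → Integrable (fun p : E × E => f p.1) π := by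
    intro f hf
    rw [← m1] at hf
    exact hf.comp_measurable measurable_fst
  have i2 : ∀ f : E → ℝ, Integrable f ν → Integrable (fun p : E × E => f p.2) π := by
    intro f hf
    rw [← m2] at hf
    exact hf.comp_measurable measurable_snd
  have ic : Integrable (fun p : E × E => ‖p.1 - p.2‖) π := by
    refine Integrable.mono' ((i1 _ hμ).add (i2 _ hν))
      (by fun_prop : Continuous fun p : E × E => ‖p.1 - p.2‖).aestronglyMeasurable
      (Filter.Eventually.of_forall fun p => ?_)
    simpa using norm_sub_le p.1 p.2
  have e1 : ∫ x, g x ∂μ = ∫ p, g p.1 ∂π := by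
    rw [← m1, integral_map measurable_fst.aemeasurable hg.continuous.aestronglyMeasurable]
  have e2 : ∫ x, g x ∂ν = ∫ p, g p.2 ∂π := by
    rw [← m2, integral_map measurable_snd.aemeasurable hg.continuous.aestronglyMeasurable]
  have j1 := i1 g (lip_int μ hμ g hg)
  have j2 := i2 g (lip_int ν hν g hg)
  rw [e1, e2, ← integral_sub j1 j2]
  refine integral_mono (j1.sub j2) ic fun p => ?_
  have := hg.dist_le_mul p.1 p.2
  rw [Real.dist_eq, dist_eq_norm, NNReal.coe_one, one_mul] at this
  exact le_of_abs_le this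



/-- **Kantorovich duality, existence part.** For probability measures `μ, ν` on `ℝⁿ`
with finite first moments, there exist an optimal coupling `π` and an optimal
1-Lipschitz critic `f`, and the optimal primal and dual values coincide. -/
theorem kantorovich_duality (n : ℕ)
    (μ ν : Measure (EuclideanSpace ℝ (Fin n)))
    [IsProbabilityMeasure μ] [IsProbabilityMeasure ν]
    (hμ : Integrable (fun x => ‖x‖) μ) (hν : Integrable (fun x => ‖x‖) ν) :
    ∃ (π : Measure (EuclideanSpace ℝ (Fin n) × EuclideanSpace ℝ (Fin n)))
      (f : EuclideanSpace ℝ (Fin n) → ℝ),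
      IsProbabilityMeasure π ∧
      π.map Prod.fst = μ ∧ π.map Prod.snd = ν ∧
      LipschitzWith 1 f ∧
      (∀ π' : Measure (EuclideanSpace ℝ (Fin n) × EuclideanSpace ℝ (Fin n)),
        IsProbabilityMeasure π' → π'.map Prod.fst = μ → π'.map Prod.snd = ν →
          ∫ p, ‖p.1 - p.2‖ ∂π ≤ ∫ p, ‖p.1 - p.2‖ ∂π') ∧
      (∀ g : EuclideanSpace ℝ (Fin n) → ℝ, LipschitzWith 1 g →
          ∫ x, g x ∂μ - ∫ x, g x ∂ν ≤ ∫ x, f x ∂μ - ∫ x, f x ∂ν) ∧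
      ∫ p, ‖p.1 - p.2‖ ∂π = ∫ x, f x ∂μ - ∫ x, f x ∂ν := by
  obtain ⟨f, hf, hmax⟩ := dual_attained μ ν hμ hν
  have hc : (fun p : EuclideanSpace ℝ (Fin n) × EuclideanSpace ℝ (Fin n) => ‖p.1 - p.2‖)
      ∈ LG μ ν :=
    ⟨fun x => ‖x‖, fun x => ‖x‖, hμ, hν, fun x y => by simpa using norm_sub_le x y⟩
  obtain ⟨Λ, hΛc, hΛ⟩ := hb_lemma μ ν _ hc (∫ x, f x ∂μ - ∫ x, f x ∂ν)
    (fun φ ψ t hφ hψ ht h => dual_ineq μ ν hμ hν _ hmax φ ψ t hφ hψ ht h)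
  obtain ⟨π, hπ, m1, m2, hle⟩ := coupling_of_functional μ ν hμ hν Λ hΛ
  have h1 := weak_duality μ ν hμ hν π m1 m2 f hf
  have h0 : 0 ≤ ∫ x, f x ∂μ - ∫ x, f x ∂ν := by
    simpa using hmax (fun _ => 0) (LipschitzWith.const' 0)
  have h2 : ∫ p, ‖p.1 - p.2‖ ∂π ≤ ∫ x, f x ∂μ - ∫ x, f x ∂ν := by
    have := hle _ hc (by fun_prop) (fun p => norm_nonneg _)
    rw [integral_eq_lintegral_of_nonneg_ae (Filter.Eventually.of_forall fun p => norm_nonneg _)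
      (by fun_prop : Continuous fun p : EuclideanSpace ℝ (Fin n) × EuclideanSpace ℝ (Fin n) =>
        ‖p.1 - p.2‖).aestronglyMeasurable]
    exact ENNReal.toReal_le_of_le_ofReal h0 (this.trans (ENNReal.ofReal_le_ofReal hΛc))
  refine ⟨π, f, hπ, m1, m2, hf, fun π' _ m1' m2' => ?_, hmax, le_antisymm h2 h1⟩
  exact h2.trans (weak_duality μ ν hμ hν π' m1' m2' f hf)
end

section
/- Let μ and ν be two probability measures on ℝⁿ with finite first moments (∫‖x‖ dμ < ∞ and ∫‖x‖ dν < ∞), and let π* be a coupling of μ and ν. Then π* minimizes ∫‖x−y‖ dπ(x,y) over all couplings π of μ and ν if and only if every 1-Lipschitz function f* : ℝⁿ → ℝ that maximizes ∫ f dμ − ∫ f dν over all 1-Lipschitz f satisfies f*(x) − f*(y) = ‖x − y‖ for all (x,y) in the (topological) support of π*. -/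
open MeasureTheory

/-- The (topological) support of a measure: the set of points all of whose open
neighbourhoods have positive measure. -/
def measureSupport {X : Type*} [TopologicalSpace X] [MeasurableSpace X] (π : Measure X) : Set X :=
  {x | ∀ U : Set X, IsOpen U → x ∈ U → 0 < π U}

open Filter Topology

set_option linter.unusedSectionVars false

section KR
variable {E : Type*} [NormedAddCommGroup E] [MeasurableSpace E] [BorelSpace E] [SecondCountableTopology E]

lemma lip_int_s2 {f : E → ℝ} (hf : LipschitzWith 1 f) {μ : Measure E} [IsFiniteMeasure μ]
    (hμ : Integrable (fun x => ‖x‖) μ) : Integrable f μ := by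
  refine Integrable.mono' (hμ.add (integrable_const |f 0|)) hf.continuous.aestronglyMeasurable ?_
  refine Eventually.of_forall fun x => ?_
  have := hf.dist_le_mul x 0
  simp only [NNReal.coe_one, one_mul, Real.dist_eq, dist_zero_right] at this
  simp only [Real.norm_eq_abs, Pi.add_apply]
  have h2 := abs_add_le (f x - f 0) (f 0)
  rw [sub_add_cancel] at h2
  linarith

/-- existence of a maximizer -/
lemma exists_max {μ ν : Measure E} [IsProbabilityMeasure μ] [IsProbabilityMeasure ν]
    (hμ : Integrable (fun x => ‖x‖) μ) (hν : Integrable (fun x => ‖x‖) ν) :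
    ∃ f : E → ℝ, LipschitzWith 1 f ∧ ∀ g : E → ℝ, LipschitzWith 1 g →
      ∫ x, g x ∂μ - ∫ x, g x ∂ν ≤ ∫ x, f x ∂μ - ∫ x, f x ∂ν := by
  set J : (E → ℝ) → ℝ := fun g => ∫ x, g x ∂μ - ∫ x, g x ∂ν with hJ
  have hbd : ∀ g : E → ℝ, LipschitzWith 1 g → g 0 = 0 → ∀ x, |g x| ≤ ‖x‖ := by
    intro g hg h0 x
    have := hg.dist_le_mul x 0
    simpa [Real.dist_eq, h0] using this
  set S : Set ℝ := J '' {g | LipschitzWith 1 g ∧ g 0 = 0} with hS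
  have hne : S.Nonempty := ⟨J 0, 0, ⟨LipschitzWith.const' 0, rfl⟩, rfl⟩
  have hSb : BddAbove S := by
    refine ⟨∫ x, ‖x‖ ∂μ + ∫ x, ‖x‖ ∂ν, ?_⟩
    rintro _ ⟨g, ⟨hg, h0⟩, rfl⟩
    have h1 : ∫ x, g x ∂μ ≤ ∫ x, ‖x‖ ∂μ :=
      integral_mono (lip_int_s2 hg hμ) hμ fun x => (le_abs_self _).trans (hbd g hg h0 x)
    have h2 : ∫ x, -g x ∂ν ≤ ∫ x, ‖x‖ ∂ν :=
      integral_mono (lip_int_s2 hg hν).neg hν fun x => (neg_le_abs _).trans (hbd g hg h0 x)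
    rw [integral_neg] at h2
    simp only [hJ]; linarith
  obtain ⟨u, -, hu, huS⟩ := exists_seq_tendsto_sSup hne hSb
  choose F hF hFu using huS
  have hFl : ∀ k, LipschitzWith 1 (F k) := fun k => (hF k).1
  -- subsequence
  have hcomp : IsCompact (Set.univ.pi fun i : ℕ => Set.Icc (-‖TopologicalSpace.denseSeq E i‖) ‖TopologicalSpace.denseSeq E i‖) :=
    isCompact_univ_pi fun i => isCompact_Icc
  obtain ⟨a, -, φ, hφ, hlim⟩ := hcomp.tendsto_subseq (x := fun k i => F k (TopologicalSpace.denseSeq E i)) (by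
    intro k i _
    exact abs_le.1 (hbd _ (hF k).1 (hF k).2 _))
  have hcauchy : ∀ x, CauchySeq fun k => F (φ k) x := by
    intro x
    rw [Metric.cauchySeq_iff]
    intro ε hε
    obtain ⟨d, hdx⟩ := (TopologicalSpace.denseRange_denseSeq E).exists_dist_lt x (ε := ε/3) (by positivity)
    have hc : CauchySeq fun k => F (φ k) (TopologicalSpace.denseSeq E d) :=
      ((tendsto_pi_nhds.1 hlim) d).cauchySeq
    obtain ⟨N, hN⟩ := Metric.cauchySeq_iff.1 hc (ε/3) (by positivity)
    refine ⟨N, fun m hm k hk => ?_⟩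
    have h1 := (hFl (φ m)).dist_le_mul x (TopologicalSpace.denseSeq E d)
    have h2 := (hFl (φ k)).dist_le_mul (TopologicalSpace.denseSeq E d) x
    rw [dist_comm _ x] at h2
    simp only [NNReal.coe_one, one_mul] at h1 h2
    have h3 := hN m hm k hk
    have := dist_triangle4 (F (φ m) x) (F (φ m) (TopologicalSpace.denseSeq E d)) (F (φ k) (TopologicalSpace.denseSeq E d)) (F (φ k) x)
    linarith
  choose f hf using fun x => cauchySeq_tendsto_of_complete (hcauchy x)
  have hfl : LipschitzWith 1 f := by
    refine LipschitzWith.of_dist_le_mul fun x y => ?_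
    exact le_of_tendsto ((hf x).dist (hf y)) (Eventually.of_forall fun k => (hFl _).dist_le_mul x y)
  have hconv : ∀ (ρ : Measure E) [IsProbabilityMeasure ρ], Integrable (fun x => ‖x‖) ρ →
      Tendsto (fun k => ∫ x, F (φ k) x ∂ρ) atTop (𝓝 (∫ x, f x ∂ρ)) := by
    intro ρ _ hρ
    refine tendsto_integral_of_dominated_convergence (fun x => ‖x‖) (fun k => (hFl _).continuous.aestronglyMeasurable) hρ ?_ ?_
    · exact fun k => Eventually.of_forall fun x => hbd _ (hF _).1 (hF _).2 x
    · exact Eventually.of_forall hf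
  have hJf : J f = sSup S := by
    have h1 : Tendsto (fun k => J (F (φ k))) atTop (𝓝 (J f)) := (hconv μ hμ).sub (hconv ν hν)
    have h2 : Tendsto (fun k => J (F (φ k))) atTop (𝓝 (sSup S)) := by
      simp only [hFu]
      exact hu.comp hφ.tendsto_atTop
    exact tendsto_nhds_unique h1 h2
  refine ⟨f, hfl, fun g hg => ?_⟩
  change J g ≤ J f
  rw [hJf]
  have hg' : LipschitzWith 1 (fun x => g x - g 0) := by
    refine LipschitzWith.of_dist_le_mul fun x y => ?_
    simpa [Real.dist_eq] using hg.dist_le_mul x y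
  refine (le_of_eq ?_).trans (le_csSup hSb ⟨fun x => g x - g 0, ⟨hg', sub_self _⟩, rfl⟩)
  simp only [hJ]
  rw [integral_sub (lip_int_s2 hg hμ) (integrable_const _), integral_sub (lip_int_s2 hg hν) (integrable_const _)]
  simp

lemma cost_int {ρ : Measure (E × E)} (h1 : Integrable (fun x => ‖x‖) (ρ.map Prod.fst))
    (h2 : Integrable (fun x => ‖x‖) (ρ.map Prod.snd)) :
    Integrable (fun p : E × E => ‖p.1 - p.2‖) ρ := by
  have h1' := h1.comp_measurable measurable_fst
  have h2' := h2.comp_measurable measurable_snd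
  refine Integrable.mono' (h1'.add h2') (by fun_prop) (Eventually.of_forall fun p => ?_)
  simpa using norm_sub_le p.1 p.2

lemma dual_val {μ ν : Measure E} [IsProbabilityMeasure μ] [IsProbabilityMeasure ν]
    (hμ : Integrable (fun x => ‖x‖) μ) (hν : Integrable (fun x => ‖x‖) ν)
    {π : Measure (E × E)} (h1 : π.map Prod.fst = μ) (h2 : π.map Prod.snd = ν)
    {f : E → ℝ} (hf : LipschitzWith 1 f) :
    Integrable (fun p : E × E => f p.1 - f p.2) π ∧
    ∫ p, (f p.1 - f p.2) ∂π = ∫ x, f x ∂μ - ∫ x, f x ∂ν := by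
  subst h1 h2
  have i1 := (lip_int_s2 hf hμ).comp_measurable measurable_fst
  have i2 := (lip_int_s2 hf hν).comp_measurable measurable_snd
  refine ⟨i1.sub i2, ?_⟩
  rw [integral_map (by fun_prop) hf.continuous.aestronglyMeasurable,
    integral_map (by fun_prop) hf.continuous.aestronglyMeasurable]
  exact integral_sub i1 i2

lemma lip_le {f : E → ℝ} (hf : LipschitzWith 1 f) (x y : E) : f x - f y ≤ ‖x - y‖ := by
  have := hf.dist_le_mul x y
  rw [Real.dist_eq, dist_eq_norm] at this
  simp only [NNReal.coe_one, one_mul] at this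
  exact (le_abs_self _).trans this

/-- potential from cyclical monotonicity -/
lemma exists_pot {S : Set (E × E)} (hS : S.Nonempty)
    (hcyc : ∀ (N : ℕ) (p : ℕ → E × E), (∀ i, p i ∈ S) →
      ∑ i ∈ Finset.range (N+1), ‖(p i).1 - (p i).2‖ ≤
        ∑ i ∈ Finset.range N, ‖(p i).2 - (p (i+1)).1‖ + ‖(p N).2 - (p 0).1‖) :
    ∃ f : E → ℝ, LipschitzWith 1 f ∧ ∀ p ∈ S, ‖p.1 - p.2‖ ≤ f p.1 - f p.2 := by
  let I := ℕ × (ℕ → S)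
  have : Nonempty S := hS.to_subtype
  let C : E → I → ℝ := fun z q => ‖z - (q.2 0).1.1‖ - ∑ i ∈ Finset.range (q.1+1), ‖(q.2 i).1.1 - (q.2 i).1.2‖
    + ∑ i ∈ Finset.range q.1, ‖(q.2 i).1.2 - (q.2 (i+1)).1.1‖ + ‖(q.2 q.1).1.2‖
  have hlow : ∀ z q, -‖z‖ ≤ C z q := by
    intro z q
    have h := hcyc q.1 (fun i => (q.2 i).1) (fun i => (q.2 i).2)
    simp only [C]
    have h1 := norm_sub_le (q.2 q.1).1.2 (q.2 0).1.1
    have h2 := norm_sub_le z (z - (q.2 0).1.1)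
    rw [sub_sub_cancel] at h2
    linarith
  have hbdd : ∀ z, BddBelow (Set.range (C z)) := fun z => ⟨-‖z‖, by rintro _ ⟨q, rfl⟩; exact hlow z q⟩
  have hlip : ∀ z w, (⨅ q, C z q) ≤ (⨅ q, C w q) + ‖z - w‖ := by
    intro z w
    rw [← sub_le_iff_le_add]
    refine le_ciInf fun q => ?_
    rw [sub_le_iff_le_add]
    refine (ciInf_le (hbdd z) q).trans ?_
    simp only [C]
    have := norm_sub_le_norm_sub_add_norm_sub z w (q.2 0).1.1
    linarith
  refine ⟨fun z => -⨅ q, C z q, ?_, ?_⟩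
  · refine LipschitzWith.of_le_add fun x y => ?_
    have := hlip y x
    rw [dist_eq_norm, norm_sub_rev]
    linarith
  · rintro ⟨x, y⟩ hp
    dsimp only
    suffices h : (⨅ q, C x q) + ‖x - y‖ ≤ ⨅ q, C y q by linarith
    refine le_ciInf fun q => ?_
    rw [← le_sub_iff_add_le]
    let r : ℕ → S := fun i => Nat.casesOn i ⟨(x, y), hp⟩ q.2
    refine (ciInf_le (hbdd x) (q.1 + 1, r)).trans (le_of_eq ?_)
    have e1 := Finset.sum_range_succ' (fun i => ‖(r i).1.1 - (r i).1.2‖) (q.1 + 1)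
    have e2 := Finset.sum_range_succ' (fun i => ‖(r i).1.2 - (r (i+1)).1.1‖) q.1
    have r0 : r 0 = ⟨(x, y), hp⟩ := rfl
    have rs : ∀ i, r (i+1) = q.2 i := fun i => rfl
    simp only [C]
    rw [e1, e2]
    simp only [rs, r0, sub_self, norm_zero]
    ring

lemma cyc_mono {μ ν : Measure E} [IsProbabilityMeasure μ] [IsProbabilityMeasure ν]
    (hμ : Integrable (fun x => ‖x‖) μ) (hν : Integrable (fun x => ‖x‖) ν)
    {πs : Measure (E × E)} [IsProbabilityMeasure πs]
    (hπ₁ : πs.map Prod.fst = μ) (hπ₂ : πs.map Prod.snd = ν)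
    (hopt : ∀ π : Measure (E × E),
        IsProbabilityMeasure π → π.map Prod.fst = μ → π.map Prod.snd = ν →
          ∫ p, ‖p.1 - p.2‖ ∂πs ≤ ∫ p, ‖p.1 - p.2‖ ∂π)
    {ι : Type} [Fintype ι] [Nonempty ι] (σ : Equiv.Perm ι) (p : ι → E × E)
    (hp : ∀ i, p i ∈ πs.support) :
    ∑ i, ‖(p i).1 - (p i).2‖ ≤ ∑ i, ‖(p (σ i)).1 - (p i).2‖ := by
  refine le_of_forall_pos_le_add fun δ hδ => ?_
  set M : ℝ := (Fintype.card ι : ℝ) with hM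
  have hMpos : 0 < M := by simp [hM, Fintype.card_pos]
  set ε : ℝ := δ / (4 * M) with hε
  have hεpos : 0 < ε := by positivity
  set A : ι → Set (E × E) := fun i => Metric.ball (p i).1 ε ×ˢ Metric.ball (p i).2 ε with hA
  have hAo : ∀ i, IsOpen (A i) := fun i => Metric.isOpen_ball.prod Metric.isOpen_ball
  have hAp : ∀ i, πs (A i) ≠ 0 := fun i =>
    ((Measure.mem_support_iff_forall _).1 (hp i) (A i) ((hAo i).mem_nhds (by simp [hA, hεpos]))).ne'
  set η : ι → Measure (E × E) := fun i => (πs (A i))⁻¹ • πs.restrict (A i) with hη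
  have hηp : ∀ i, IsProbabilityMeasure (η i) := fun i => ⟨by
    simp [hη, ENNReal.inv_mul_cancel (hAp i) (measure_ne_top _ _)]⟩
  have hηA : ∀ i, ∀ᵐ q ∂(η i), q ∈ A i := fun i =>
    Measure.ae_smul_measure (ae_restrict_mem (hAo i).measurableSet) _
  set a : ι → Measure E := fun i => (η i).map Prod.fst with ha
  set b : ι → Measure E := fun i => (η i).map Prod.snd with hb
  have hap : ∀ i, IsProbabilityMeasure (a i) := fun i => Measure.isProbabilityMeasure_map (by fun_prop)
  have hbp : ∀ i, IsProbabilityMeasure (b i) := fun i => Measure.isProbabilityMeasure_map (by fun_prop)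
  set θ : ι → Measure (E × E) := fun i => (a (σ i)).prod (b i) with hθ
  have hθ1 : ∀ i, (θ i).map Prod.fst = a (σ i) := fun i => by simp [hθ, Measure.map_fst_prod]
  have hθ2 : ∀ i, (θ i).map Prod.snd = b i := fun i => by simp [hθ, Measure.map_snd_prod]
  -- integrability
  have hηle : ∀ i, η i ≤ (πs (A i))⁻¹ • πs := fun i => by
    simp only [hη]; gcongr; exact Measure.restrict_le_self
  have hinv : ∀ i, (πs (A i))⁻¹ ≠ ⊤ := fun i => ENNReal.inv_ne_top.2 (hAp i)
  have hai : ∀ i, Integrable (fun x => ‖x‖) (a i) := fun i => by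
    refine Integrable.mono_measure (ν := (πs (A i))⁻¹ • μ) (hμ.smul_measure (hinv i)) ?_
    rw [← hπ₁, ← Measure.map_smul]
    exact Measure.map_mono (hηle i) measurable_fst
  have hbi : ∀ i, Integrable (fun x => ‖x‖) (b i) := fun i => by
    refine Integrable.mono_measure (ν := (πs (A i))⁻¹ • ν) (hν.smul_measure (hinv i)) ?_
    rw [← hπ₂, ← Measure.map_smul]
    exact Measure.map_mono (hηle i) measurable_snd
  have hci : Integrable (fun p : E × E => ‖p.1 - p.2‖) πs := cost_int (hπ₁ ▸ hμ) (hπ₂ ▸ hν)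
  have hηi : ∀ i, Integrable (fun p : E × E => ‖p.1 - p.2‖) (η i) := fun i => cost_int (hai i) (hbi i)
  have hθi : ∀ i, Integrable (fun p : E × E => ‖p.1 - p.2‖) (θ i) := fun i =>
    cost_int (by rw [hθ1]; exact hai _) (by rw [hθ2]; exact hbi _)
  -- cost bounds
  have hlow : ∀ i, ‖(p i).1 - (p i).2‖ - 2 * ε ≤ ∫ q, ‖q.1 - q.2‖ ∂(η i) := by
    intro i
    have : ∫ q, (‖(p i).1 - (p i).2‖ - 2 * ε) ∂(η i) ≤ ∫ q, ‖q.1 - q.2‖ ∂(η i) := by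
      refine integral_mono_ae (integrable_const _) (hηi i) ?_
      filter_upwards [hηA i] with q hq
      have h1 : dist q.1 (p i).1 < ε := hq.1
      have h2 : dist q.2 (p i).2 < ε := hq.2
      have := dist_triangle4 (p i).1 q.1 q.2 (p i).2
      rw [dist_comm (p i).1 q.1, dist_eq_norm (p i).1 (p i).2, dist_eq_norm q.1 q.2] at this
      linarith
    simpa using this
  have haA : ∀ i, ∀ᵐ x ∂(a i), dist x (p i).1 < ε := fun i => by
    rw [ha, ae_map_iff (by fun_prop) (measurableSet_lt (by fun_prop) (by fun_prop))]
    exact (hηA i).mono fun q hq => hq.1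
  have hbA : ∀ i, ∀ᵐ x ∂(b i), dist x (p i).2 < ε := fun i => by
    rw [hb, ae_map_iff (by fun_prop) (measurableSet_lt (by fun_prop) (by fun_prop))]
    exact (hηA i).mono fun q hq => hq.2
  have hupp : ∀ i, ∫ q, ‖q.1 - q.2‖ ∂(θ i) ≤ ‖(p (σ i)).1 - (p i).2‖ + 2 * ε := by
    intro i
    have hθp : IsProbabilityMeasure (θ i) := by simp only [hθ]; infer_instance
    have : ∫ q, ‖q.1 - q.2‖ ∂(θ i) ≤ ∫ q, (‖(p (σ i)).1 - (p i).2‖ + 2 * ε) ∂(θ i) := by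
      refine integral_mono_ae (hθi i) (integrable_const _) ?_
      filter_upwards [Measure.quasiMeasurePreserving_fst.ae (haA (σ i)),
        Measure.quasiMeasurePreserving_snd.ae (hbA i)] with q h1 h2
      have := dist_triangle4 q.1 (p (σ i)).1 (p i).2 q.2
      rw [dist_comm (p i).2 q.2, dist_eq_norm (p (σ i)).1 (p i).2, dist_eq_norm q.1 q.2] at this
      linarith
    simpa using this
  -- the competitor
  set K : ENNReal := ∑ i, (πs (A i))⁻¹ with hK
  have hKt : K ≠ ⊤ := ENNReal.sum_ne_top.2 fun i _ => hinv i
  have hK0 : K ≠ 0 := by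
    obtain ⟨i⟩ := ‹Nonempty ι›
    intro h
    have := (Finset.sum_eq_zero_iff.1 h) i (Finset.mem_univ _)
    exact measure_ne_top πs (A i) (ENNReal.inv_eq_zero.1 this)
  have hle : ∑ i, η i ≤ K • πs := by
    rw [hK, Finset.sum_smul]
    exact Finset.sum_le_sum fun i _ => hηle i
  set ρ : Measure (E × E) := K • πs - ∑ i, η i with hρ
  have hsum : ρ + ∑ i, η i = K • πs := Measure.sub_add_cancel_of_le hle
  have hKfin : IsFiniteMeasure (K • πs) := Measure.smul_finite _ hKt
  have hρfin : IsFiniteMeasure ρ := isFiniteMeasure_of_le _ Measure.sub_le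
  have hm1 : ∀ (s : ι → Measure (E × E)) (f : E × E → E), Measurable f → (∑ i, s i).map f = ∑ i, (s i).map f := by
    intro s f hf
    exact map_sum (Measure.mapₗ f) s _ |> fun h => by simpa [Measure.mapₗ_apply_of_measurable hf] using h
  have key : ∀ (f : E × E → E), Measurable f → ∑ i, (θ i).map f = ∑ i, (η i).map f →
      (K⁻¹ • (ρ + ∑ i, θ i)).map f = πs.map f := by
    intro f hf h
    rw [Measure.map_smul, Measure.map_add _ _ hf, hm1 θ f hf, h, ← hm1 η f hf, ← Measure.map_add _ _ hf, hsum,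
      Measure.map_smul, smul_smul, ENNReal.inv_mul_cancel hK0 hKt, one_smul]
  have k1 := key Prod.fst measurable_fst (by simp only [hθ1]; exact Equiv.sum_comp σ a)
  have k2 := key Prod.snd measurable_snd (by simp only [hθ2, hb])
  have hprob : IsProbabilityMeasure (K⁻¹ • (ρ + ∑ i, θ i)) := by
    constructor
    have : (Measure.map Prod.fst (K⁻¹ • (ρ + ∑ i, θ i))) Set.univ = 1 := by rw [k1, hπ₁]; simp
    rwa [Measure.map_apply measurable_fst MeasurableSet.univ] at this
  have hfin := hopt _ hprob (k1.trans hπ₁) (k2.trans hπ₂)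
  have hρi : Integrable (fun p : E × E => ‖p.1 - p.2‖) ρ :=
    (hci.smul_measure hKt).mono_measure Measure.sub_le
  have hηI : Integrable (fun p : E × E => ‖p.1 - p.2‖) (∑ i, η i) :=
    integrable_finsetSum_measure.2 fun i _ => hηi i
  have hθI : Integrable (fun p : E × E => ‖p.1 - p.2‖) (∑ i, θ i) :=
    integrable_finsetSum_measure.2 fun i _ => hθi i
  have e1 : ∫ p, ‖p.1 - p.2‖ ∂ρ + ∑ i, ∫ p, ‖p.1 - p.2‖ ∂(η i) = K.toReal * ∫ p, ‖p.1 - p.2‖ ∂πs := by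
    rw [← integral_finsetSum_measure fun i _ => hηi i, ← integral_add_measure hρi hηI, hsum, integral_smul_measure, smul_eq_mul]
  rw [integral_smul_measure, integral_add_measure hρi hθI, integral_finsetSum_measure fun i _ => hθi i, ENNReal.toReal_inv,
    smul_eq_mul, ← div_eq_inv_mul, le_div_iff₀ (ENNReal.toReal_pos hK0 hKt)] at hfin
  have s1 := Finset.sum_le_sum fun i (_ : i ∈ Finset.univ) => hlow i
  have s2 := Finset.sum_le_sum fun i (_ : i ∈ Finset.univ) => hupp i
  rw [Finset.sum_sub_distrib] at s1
  rw [Finset.sum_add_distrib] at s2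
  simp only [Finset.sum_const, Finset.card_univ, nsmul_eq_mul] at s1 s2
  have : (Fintype.card ι : ℝ) * (2 * ε) = δ / 2 := by
    rw [← hM, hε]; field_simp; norm_num
  linarith

end KR

lemma supp_eq {X : Type*} [TopologicalSpace X] [MeasurableSpace X] (π : Measure X) :
    measureSupport π = π.support := by
  ext x
  rw [Measure.mem_support_iff_forall]
  constructor
  · intro h U hU
    obtain ⟨V, hVU, hV, hx⟩ := mem_nhds_iff.1 hU
    exact (h V hV hx).trans_le (measure_mono hVU)
  · exact fun h U hU hx => h U (hU.mem_nhds hx)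

/-- **Kantorovich duality, optimality characterization.** A coupling `π*` is optimal
iff every optimal 1-Lipschitz critic `f*` satisfies `f*(x) - f*(y) = ‖x - y‖` on the
support of `π*`. -/
theorem optimal_coupling_iff_critic_exhausts (n : ℕ)
    (μ ν : Measure (EuclideanSpace ℝ (Fin n)))
    [IsProbabilityMeasure μ] [IsProbabilityMeasure ν]
    (hμ : Integrable (fun x => ‖x‖) μ) (hν : Integrable (fun x => ‖x‖) ν)
    (πs : Measure (EuclideanSpace ℝ (Fin n) × EuclideanSpace ℝ (Fin n)))
    [IsProbabilityMeasure πs]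
    (hπ₁ : πs.map Prod.fst = μ) (hπ₂ : πs.map Prod.snd = ν) :
    (∀ π : Measure (EuclideanSpace ℝ (Fin n) × EuclideanSpace ℝ (Fin n)),
        IsProbabilityMeasure π → π.map Prod.fst = μ → π.map Prod.snd = ν →
          ∫ p, ‖p.1 - p.2‖ ∂πs ≤ ∫ p, ‖p.1 - p.2‖ ∂π)
    ↔
    (∀ f : EuclideanSpace ℝ (Fin n) → ℝ, LipschitzWith 1 f →
        (∀ g : EuclideanSpace ℝ (Fin n) → ℝ, LipschitzWith 1 g →
            ∫ x, g x ∂μ - ∫ x, g x ∂ν ≤ ∫ x, f x ∂μ - ∫ x, f x ∂ν) →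
        ∀ p ∈ measureSupport πs, f p.1 - f p.2 = ‖p.1 - p.2‖) := by
  rw [supp_eq]
  have hci := cost_int (ρ := πs) (hπ₁ ▸ hμ) (hπ₂ ▸ hν)
  constructor
  · intro hopt f hf hmax
    obtain ⟨φ, hφ, hφS⟩ := exists_pot (S := πs.support)
      (Measure.nonempty_support (IsProbabilityMeasure.ne_zero πs)) (by
        intro N p hp
        have := cyc_mono hμ hν hπ₁ hπ₂ hopt (finRotate (N+1)) (fun i => p i) (fun i => hp i)
        rw [Fin.sum_univ_castSucc (fun i : Fin (N+1) => ‖(p (finRotate (N+1) i)).1 - (p i).2‖), finRotate_last,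
          Fin.sum_univ_eq_sum_range (fun i => ‖(p i).1 - (p i).2‖)] at this
        refine this.trans (le_of_eq ?_)
        rw [← Fin.sum_univ_eq_sum_range (fun i => ‖(p i).2 - (p (i+1)).1‖)]
        congr 1
        · refine Finset.sum_congr rfl fun i _ => ?_
          rw [norm_sub_rev]
          simp
        · rw [norm_sub_rev]; simp)
    obtain ⟨fi, fe⟩ := dual_val hμ hν hπ₁ hπ₂ hf
    obtain ⟨gi, ge⟩ := dual_val hμ hν hπ₁ hπ₂ hφ
    have h1 : ∫ p, ‖p.1 - p.2‖ ∂πs ≤ ∫ p, (φ p.1 - φ p.2) ∂πs :=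
      integral_mono_ae hci gi (by filter_upwards [Measure.support_mem_ae] with p hp using hφS p hp)
    have h2 := hmax φ hφ
    have h3 : ∫ p, (f p.1 - f p.2) ∂πs ≤ ∫ p, ‖p.1 - p.2‖ ∂πs :=
      integral_mono fi hci fun p => lip_le hf _ _
    have h4 : (fun p => f p.1 - f p.2) =ᵐ[πs] fun p => ‖p.1 - p.2‖ :=
      (integral_eq_iff_of_ae_le fi hci (Eventually.of_forall fun p => lip_le hf _ _)).1 (by linarith)
    have hfc := hf.continuous
    exact fun p hp => Measure.support_subset_of_isClosed
      (isClosed_eq (by fun_prop) (by fun_prop)) h4 hp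
  · intro h π _ h1 h2
    obtain ⟨f, hf, hmax⟩ := exists_max hμ hν
    obtain ⟨fi, fe⟩ := dual_val hμ hν hπ₁ hπ₂ hf
    obtain ⟨gi, ge⟩ := dual_val hμ hν h1 h2 hf
    have e : ∫ p, ‖p.1 - p.2‖ ∂πs = ∫ p, (f p.1 - f p.2) ∂πs :=
      integral_congr_ae (by filter_upwards [Measure.support_mem_ae] with p hp using (h f hf hmax p hp).symm)
    rw [e, fe, ← ge]
    exact integral_mono gi (cost_int (h1 ▸ hμ) (h2 ▸ hν)) fun p => lip_le hf _ _
end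

section
/- Let α > 0 and let μ ≠ ν be two probability measures on ℝⁿ with finite first moments. Let f* : ℝⁿ → ℝ be α-Lipschitz and maximize ∫ f dμ − ∫ f dν over all α-Lipschitz functions f. Then f* exhausts the Lipschitz constraint: there exist points x ≠ y in ℝⁿ with f*(x) − f*(y) = α‖x − y‖. -/
open MeasureTheory

/-- Perturbed inf-convolution. -/
noncomputable def critG {n : ℕ} (α : ℝ) (f h : EuclideanSpace ℝ (Fin n) → ℝ) (ε : ℝ)
    (x : EuclideanSpace ℝ (Fin n)) : ℝ := ⨅ y, (f y + ε * h y + α * ‖x - y‖)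

section
variable {n : ℕ} {α : ℝ} {f h : EuclideanSpace ℝ (Fin n) → ℝ} {M ε : ℝ}

lemma critG_lb (hf : ∀ x y, f x - f y ≤ α * ‖x - y‖) (hM : ∀ x, |h x| ≤ M) (hε : 0 < ε)
    (x y : EuclideanSpace ℝ (Fin n)) :
    f x - ε * M ≤ f y + ε * h y + α * ‖x - y‖ := by
  have h1 := hf x y
  have h2 := (abs_le.1 (hM y)).1
  nlinarith

lemma critG_bdd (hf : ∀ x y, f x - f y ≤ α * ‖x - y‖) (hM : ∀ x, |h x| ≤ M) (hε : 0 < ε)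
    (x : EuclideanSpace ℝ (Fin n)) :
    BddBelow (Set.range fun y => f y + ε * h y + α * ‖x - y‖) :=
  ⟨f x - ε * M, by rintro _ ⟨y, rfl⟩; exact critG_lb hf hM hε x y⟩

lemma critG_ge (hf : ∀ x y, f x - f y ≤ α * ‖x - y‖) (hM : ∀ x, |h x| ≤ M) (hε : 0 < ε)
    (x : EuclideanSpace ℝ (Fin n)) : f x - ε * M ≤ critG α f h ε x :=
  le_ciInf fun y => critG_lb hf hM hε x y

lemma critG_le (hf : ∀ x y, f x - f y ≤ α * ‖x - y‖) (hM : ∀ x, |h x| ≤ M) (hε : 0 < ε)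
    (x : EuclideanSpace ℝ (Fin n)) : critG α f h ε x ≤ f x + ε * h x := by
  have := ciInf_le (critG_bdd hf hM hε x) x
  simpa [critG] using this

lemma critG_lip (hα : 0 < α) (hf : ∀ x y, f x - f y ≤ α * ‖x - y‖) (hM : ∀ x, |h x| ≤ M)
    (hε : 0 < ε) (x y : EuclideanSpace ℝ (Fin n)) :
    critG α f h ε x - critG α f h ε y ≤ α * ‖x - y‖ := by
  have : critG α f h ε x - α * ‖x - y‖ ≤ critG α f h ε y := by
    refine le_ciInf fun z => ?_
    have h1 : critG α f h ε x ≤ _ := ciInf_le (critG_bdd hf hM hε x) z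
    have h2 : ‖x - z‖ ≤ ‖x - y‖ + ‖y - z‖ := norm_sub_le_norm_sub_add_norm_sub x y z
    have h3 := mul_le_mul_of_nonneg_left h2 hα.le
    linarith
  linarith

lemma lip_continuous (hα : 0 < α) {g : EuclideanSpace ℝ (Fin n) → ℝ}
    (hg : ∀ x y, g x - g y ≤ α * ‖x - y‖) : Continuous g := by
  have : LipschitzWith ⟨α, hα.le⟩ g := by
    refine LipschitzWith.of_le_add_mul _ fun x y => ?_
    have := hg x y
    rw [dist_eq_norm]
    change g x ≤ g y + α * ‖x - y‖
    linarith
  exact this.continuous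

lemma lip_integrable (hα : 0 < α) {g : EuclideanSpace ℝ (Fin n) → ℝ}
    (hg : ∀ x y, g x - g y ≤ α * ‖x - y‖) (μ : Measure (EuclideanSpace ℝ (Fin n)))
    [IsProbabilityMeasure μ] (hμ : Integrable (fun x => ‖x‖) μ) : Integrable g μ := by
  refine Integrable.mono' ((integrable_const |g 0|).add (hμ.const_mul α))
    (lip_continuous hα hg).aestronglyMeasurable (Filter.Eventually.of_forall fun x => ?_)
  have h1 := hg x 0
  have h2 := hg 0 x
  simp only [sub_zero, zero_sub, norm_neg] at h1 h2
  have h3 := neg_abs_le (g 0)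
  have h4 := le_abs_self (g 0)
  simp only [Pi.add_apply, Real.norm_eq_abs]
  exact abs_le.2 ⟨by linarith, by linarith⟩

lemma critG_near (hα : 0 < α) (hf : ∀ x y, f x - f y ≤ α * ‖x - y‖)
    (hs : ∀ x y, x ≠ y → f x - f y < α * ‖x - y‖) (hM : ∀ x, |h x| ≤ M)
    (hc : Continuous h) (x : EuclideanSpace ℝ (Fin n)) {η : ℝ} (hη : 0 < η) :
    ∃ δ > 0, ∀ ε, 0 < ε → ε * (2 * M) < δ → f x + ε * h x - ε * η ≤ critG α f h ε x := by
  obtain ⟨r, hr, hrh⟩ := Metric.continuous_iff.1 hc x η hη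
  have hfc := lip_continuous hα hf
  obtain ⟨δ, hδ, hδs⟩ := (isCompact_sphere x (r/2)).exists_forall_le'
    (f := fun z => α * ‖x - z‖ - (f x - f z)) (a := 0) (by fun_prop) (by
      intro z hz
      have : x ≠ z := by
        rintro rfl
        simp at hz; linarith
      have := hs x z this
      linarith)
  refine ⟨δ, hδ, fun ε hε hεδ => le_ciInf fun y => ?_⟩
  by_cases hy : dist y x < r
  · have h1 := hrh y hy
    rw [Real.dist_eq] at h1
    have h2 := (abs_lt.1 h1).1
    have := hf x y
    nlinarith
  · have hy : r ≤ ‖y - x‖ := by rw [← dist_eq_norm]; exact not_lt.1 hy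
    have hpos : 0 < ‖y - x‖ := by linarith
    set t := r / 2 / ‖y - x‖ with ht
    have ht0 : 0 ≤ t := by positivity
    have ht1 : t ≤ 1 := by rw [ht, div_le_one hpos]; linarith
    have htn : t * ‖y - x‖ = r / 2 := by rw [ht]; field_simp
    set z := x + t • (y - x) with hz
    have e1 : ‖x - z‖ = t * ‖y - x‖ := by
      rw [norm_sub_rev, hz, add_sub_cancel_left, norm_smul, Real.norm_of_nonneg ht0]
    have e2 : ‖z - y‖ = (1 - t) * ‖y - x‖ := by
      rw [norm_sub_rev, show y - z = (1 - t) • (y - x) by rw [hz]; module, norm_smul,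
        Real.norm_of_nonneg (by linarith)]
    have hzs : z ∈ Metric.sphere x (r/2) := by
      rw [mem_sphere_iff_norm, norm_sub_rev, e1, htn]
    have h1 := hδs z hzs
    have h2 := hf z y
    have e3 : α * ‖x - y‖ = α * ‖x - z‖ + α * ‖z - y‖ := by
      rw [e1, e2, norm_sub_rev x y]; ring
    have h3 := (abs_le.1 (hM y)).1
    have h4 := (abs_le.1 (hM x)).2
    nlinarith [mul_pos hε hη]

open Filter Topology in
lemma critG_integral (hα : 0 < α) (hf : ∀ x y, f x - f y ≤ α * ‖x - y‖)
    (hs : ∀ x y, x ≠ y → f x - f y < α * ‖x - y‖) (hM : ∀ x, |h x| ≤ M)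
    (hc : Continuous h) (μ : Measure (EuclideanSpace ℝ (Fin n))) [IsProbabilityMeasure μ] :
    Tendsto (fun k : ℕ => ∫ x, (critG α f h (1 / ((k : ℝ) + 1)) x - f x) / (1 / ((k : ℝ) + 1)) ∂μ)
      atTop (𝓝 (∫ x, h x ∂μ)) := by
  have hk : ∀ k : ℕ, 0 < 1 / ((k : ℝ) + 1) := fun k => by positivity
  refine tendsto_integral_of_dominated_convergence (fun _ => M) ?_ (integrable_const M) ?_ ?_
  · intro k
    exact (((lip_continuous hα (critG_lip hα hf hM (hk k))).sub
      (lip_continuous hα hf)).div_const _).aestronglyMeasurable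
  · intro k
    refine Eventually.of_forall fun x => ?_
    have h1 := critG_ge hf hM (hk k) x
    have h2 := critG_le hf hM (hk k) x
    have h3 := (abs_le.1 (hM x)).2
    have h4 := mul_le_mul_of_nonneg_left h3 (hk k).le
    rw [Real.norm_eq_abs, abs_le, le_div_iff₀ (hk k), div_le_iff₀ (hk k)]
    constructor <;> linarith
  · refine Eventually.of_forall fun x => ?_
    rw [Metric.tendsto_nhds]
    intro η hη
    obtain ⟨δ, hδ, H⟩ := critG_near hα hf hs hM hc x (half_pos hη)
    have ht : Tendsto (fun k : ℕ => 1 / ((k : ℝ) + 1) * (2 * M)) atTop (𝓝 (0 * (2 * M))) :=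
      tendsto_one_div_add_atTop_nhds_zero_nat.mul_const _
    rw [zero_mul] at ht
    filter_upwards [ht.eventually_lt_const hδ] with k hkδ
    have h1 := H _ (hk k) hkδ
    have h2 := critG_le hf hM (hk k) x
    have h3 : h x - η / 2 ≤ (critG α f h (1 / ((k : ℝ) + 1)) x - f x) / (1 / ((k : ℝ) + 1)) := by
      rw [le_div_iff₀ (hk k)]; linarith
    have h4 : (critG α f h (1 / ((k : ℝ) + 1)) x - f x) / (1 / ((k : ℝ) + 1)) ≤ h x := by
      rw [div_le_iff₀ (hk k)]; linarith
    rw [Real.dist_eq, abs_lt]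
    constructor <;> linarith

end

/-- **Exhaustion of the Lipschitz constraint.** If `μ ≠ ν` have finite first moments and
`f*` is an optimal `α`-Lipschitz critic, then there are points `x ≠ y` with
`f*(x) - f*(y) = α‖x - y‖`. -/
theorem optimal_critic_exhausts_lipschitz_constraint (n : ℕ) (α : ℝ) (hα : 0 < α)
    (μ ν : Measure (EuclideanSpace ℝ (Fin n)))
    [IsProbabilityMeasure μ] [IsProbabilityMeasure ν]
    (hμ : Integrable (fun x => ‖x‖) μ) (hν : Integrable (fun x => ‖x‖) ν)
    (hμν : μ ≠ ν)
    (f : EuclideanSpace ℝ (Fin n) → ℝ)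
    (hf : ∀ x y, f x - f y ≤ α * ‖x - y‖)
    (hopt : ∀ g : EuclideanSpace ℝ (Fin n) → ℝ, (∀ x y, g x - g y ≤ α * ‖x - y‖) →
        ∫ x, g x ∂μ - ∫ x, g x ∂ν ≤ ∫ x, f x ∂μ - ∫ x, f x ∂ν) :
    ∃ x y : EuclideanSpace ℝ (Fin n), x ≠ y ∧ f x - f y = α * ‖x - y‖ := by
  by_contra hcon
  push Not at hcon
  have hs : ∀ x y, x ≠ y → f x - f y < α * ‖x - y‖ := fun x y hxy =>
    lt_of_le_of_ne (hf x y) (hcon x y hxy)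
  have key : ∀ h : BoundedContinuousFunction (EuclideanSpace ℝ (Fin n)) ℝ,
      ∫ x, h x ∂μ ≤ ∫ x, h x ∂ν := by
    intro h
    have hM : ∀ x, |h x| ≤ ‖h‖ := fun x => h.norm_coe_le_norm x
    refine le_of_tendsto_of_tendsto' (critG_integral hα hf hs hM h.continuous μ)
      (critG_integral hα hf hs hM h.continuous ν) fun k => ?_
    have hk : 0 < 1 / ((k : ℝ) + 1) := by positivity
    have hl := critG_lip hα hf hM hk
    have := hopt _ hl
    rw [integral_div, integral_div,
      integral_sub (lip_integrable hα hl μ hμ) (lip_integrable hα hf μ hμ),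
      integral_sub (lip_integrable hα hl ν hν) (lip_integrable hα hf ν hν)]
    exact div_le_div_of_nonneg_right (by linarith) hk.le
  apply hμν
  refine ext_of_forall_integral_eq_of_IsFiniteMeasure fun h => le_antisymm (key h) ?_
  have := key (-h)
  simp only [BoundedContinuousFunction.coe_neg, Pi.neg_apply, integral_neg] at this
  linarith
end

section
/- Let μ = N(0,1) be the standard normal distribution on ℝ and let ν = ½N(−1,1) + ½N(1,1) be the equal-weight mixture of the normal distributions centered at −1 and 1 with unit variance. Then the function φ*(x) = −|x| maximizes ∫ φ dμ − ∫ φ dν over all 1-Lipschitz functions φ : ℝ → ℝ; that is, for every 1-Lipschitz φ : ℝ → ℝ, ∫ φ dμ − ∫ φ dν ≤ ∫ (−|x|) dμ(x) − ∫ (−|x|) dν(x). -/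
open MeasureTheory ProbabilityTheory
open scoped ENNReal

lemma aux_int (f : ℝ → ℝ) (hf : LipschitzWith 1 f) (m : ℝ) :
    Integrable f (gaussianReal m 1) := by
  have h1 : Integrable (fun x : ℝ => x) (gaussianReal m 1) :=
    (memLp_id_gaussianReal (μ := m) (v := 1) 1).integrable le_rfl
  have h2 : Integrable (fun x : ℝ => |f 0| + |x|) (gaussianReal m 1) :=
    (integrable_const _).add h1.abs
  refine h2.mono' hf.continuous.aestronglyMeasurable (Filter.Eventually.of_forall fun x => ?_)
  have := hf.dist_le_mul x 0
  simp only [Real.dist_eq, NNReal.coe_one, one_mul, sub_zero] at this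
  rw [Real.norm_eq_abs]
  have h3 := abs_sub_abs_le_abs_sub (f x) (f 0)
  linarith

lemma aux_leb (f : ℝ → ℝ) (m : ℝ) (hf : Integrable f (gaussianReal m 1)) :
    Integrable (fun x => gaussianPDFReal m 1 x * f x) := by
  rw [gaussianReal_of_var_ne_zero m one_ne_zero,
    integrable_withDensity_iff_integrable_smul' (measurable_gaussianPDF m 1)
      (Filter.Eventually.of_forall fun x => gaussianPDF_lt_top)] at hf
  simpa [toReal_gaussianPDF] using hf

lemma aux_neg (f : ℝ → ℝ) (m : ℝ) :
    ∫ x, f (-x) ∂(gaussianReal m 1) = ∫ x, f x ∂(gaussianReal (-m) 1) := by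
  rw [← gaussianReal_map_neg]
  exact ((MeasurableEquiv.neg ℝ).measurableEmbedding.integral_map f).symm

lemma aux_sub (f : ℝ → ℝ) (hf : Continuous f) (m : ℝ) :
    ∫ x, f (1 - x) ∂(gaussianReal m 1) = ∫ x, f x ∂(gaussianReal (1 - m) 1) := by
  rw [← gaussianReal_map_const_sub, integral_map (by fun_prop) hf.aestronglyMeasurable]

lemma aux_main (h : ℝ → ℝ) (hc : Continuous h)
    (hi : ∀ m, Integrable h (gaussianReal m 1))
    (hm : ∀ x y, |x| ≤ |y| → h x ≤ h y) :
    ∫ x, h x ∂(gaussianReal 0 1) ≤ ∫ x, h x ∂(gaussianReal 1 1) := by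
  have hi' : ∀ m, Integrable (fun x => h (1 - x)) (gaussianReal m 1) := by
    intro m
    have := hi (1 - m)
    rw [← gaussianReal_map_const_sub] at this
    exact this.comp_measurable (by fun_prop)
  have e0 := aux_sub h hc 0
  have e1 := aux_sub h hc 1
  rw [sub_zero] at e0
  rw [sub_self] at e1
  have i00 := aux_leb _ _ (hi 0)
  have i01 := aux_leb _ _ (hi 1)
  have i10 := aux_leb _ _ (hi' 0)
  have i11 := aux_leb _ _ (hi' 1)
  have key : 0 ≤ ∫ x, ((gaussianPDFReal 1 1 x * h x - gaussianPDFReal 0 1 x * h x)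
      + (gaussianPDFReal 0 1 x * h (1 - x) - gaussianPDFReal 1 1 x * h (1 - x))) := by
    refine integral_nonneg fun x => ?_
    have : 0 ≤ (gaussianPDFReal 1 1 x - gaussianPDFReal 0 1 x) * (h x - h (1 - x)) := by
      rcases le_total (1 / 2) x with hx | hx
      · refine mul_nonneg (sub_nonneg.2 ?_) (sub_nonneg.2 (hm _ _ ?_))
        · simp only [gaussianPDFReal]
          gcongr ?_ * Real.exp (?_ / ?_)
          nlinarith
        · apply sq_le_sq.1; nlinarith
      · refine mul_nonneg_of_nonpos_of_nonpos (sub_nonpos.2 ?_) (sub_nonpos.2 (hm _ _ ?_))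
        · simp only [gaussianPDFReal]
          gcongr ?_ * Real.exp (?_ / ?_)
          nlinarith
        · apply sq_le_sq.1; nlinarith
    simp only [Pi.zero_apply]
    linarith
  have j1 : Integrable (fun x => gaussianPDFReal 1 1 x * h x - gaussianPDFReal 0 1 x * h x) :=
    i01.sub i00
  have j2 : Integrable (fun x => gaussianPDFReal 0 1 x * h (1 - x)
      - gaussianPDFReal 1 1 x * h (1 - x)) := i10.sub i11
  rw [integral_add j1 j2, integral_sub i01 i00, integral_sub i10 i11] at key
  simp only [integral_gaussianReal_eq_integral_smul one_ne_zero, smul_eq_mul] at *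
  linarith

/-- **A non-differentiable optimal critic for Gaussian mixtures.** For `μ = N(0,1)` and
`ν = ½N(−1,1) + ½N(1,1)`, the function `φ*(x) = −|x|` maximizes
`∫ φ dμ − ∫ φ dν` over all 1-Lipschitz functions `φ : ℝ → ℝ`. -/
theorem neg_abs_is_optimal_critic_for_gaussian_mixture
    (μ ν : Measure ℝ)
    (hμ : μ = gaussianReal 0 1)
    (hν : ν = (1 / 2 : ℝ≥0∞) • gaussianReal (-1) 1 + (1 / 2 : ℝ≥0∞) • gaussianReal 1 1) :
    ∀ φ : ℝ → ℝ, LipschitzWith 1 φ →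
      ∫ x, φ x ∂μ - ∫ x, φ x ∂ν ≤ ∫ x, -|x| ∂μ - ∫ x, -|x| ∂ν := by
  intro φ hφ
  have habs : LipschitzWith 1 (fun x : ℝ => |x|) := by
    refine LipschitzWith.of_dist_le_mul fun x y => ?_
    simpa [Real.dist_eq] using abs_abs_sub_abs_le x y
  have hφn : LipschitzWith 1 (fun x : ℝ => φ (-x)) := by
    refine LipschitzWith.of_dist_le_mul fun x y => ?_
    simpa using hφ.dist_le_mul (-x) (-y)
  have ia := fun m => aux_int _ habs m
  have iφ := fun m => aux_int _ hφ m
  have iφn := fun m => aux_int _ hφn m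
  have hL : ∀ a b, φ a - φ b ≤ |a - b| := fun a b => by
    have := hφ.dist_le_mul a b
    simp only [Real.dist_eq, NNReal.coe_one, one_mul] at this
    exact (le_abs_self _).trans this
  have main := aux_main (fun x => (φ x + φ (-x)) + 2 * |x|)
    (by have := hφ.continuous; fun_prop)
    (fun m => ((iφ m).add (iφn m)).add ((ia m).const_mul 2))
    (by
      have hev : ∀ x, φ x + φ (-x) = φ |x| + φ (-|x|) := fun x => by
        rcases abs_choice x with h | h <;> rw [h]
        rw [neg_neg, add_comm]
      intro x y hxy
      change φ x + φ (-x) + 2 * |x| ≤ φ y + φ (-y) + 2 * |y|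
      rw [hev x, hev y]
      have h1 := hL |x| |y|
      have h2 := hL (-|x|) (-|y|)
      rw [abs_of_nonpos (a := |x| - |y|) (by linarith)] at h1
      rw [abs_of_nonneg (a := -|x| - -|y|) (by linarith)] at h2
      linarith)
  have sp : ∀ m, ∫ x, ((φ x + φ (-x)) + 2 * |x|) ∂(gaussianReal m 1)
      = (∫ x, φ x ∂(gaussianReal m 1) + ∫ x, φ x ∂(gaussianReal (-m) 1))
        + 2 * ∫ x, |x| ∂(gaussianReal m 1) := fun m => by
    have j : Integrable (fun x => φ x + φ (-x)) (gaussianReal m 1) := (iφ m).add (iφn m)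
    rw [integral_add j ((ia m).const_mul 2), integral_add (iφ m) (iφn m),
      integral_const_mul, aux_neg]
  have hab := aux_neg (fun x => |x|) 1
  simp only [abs_neg] at hab
  rw [sp, sp, neg_zero] at main
  have hmix : ∀ f : ℝ → ℝ, (∀ m, Integrable f (gaussianReal m 1)) → ∫ x, f x ∂ν =
      (1 / 2) * ∫ x, f x ∂(gaussianReal (-1) 1) + (1 / 2) * ∫ x, f x ∂(gaussianReal 1 1) := by
    intro f hf
    rw [hν, integral_add_measure ((hf _).smul_measure (by simp)) ((hf _).smul_measure (by simp)),
      integral_smul_measure, integral_smul_measure]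
    simp
  rw [integral_neg, integral_neg, hmix φ iφ, hmix _ ia, hμ]
  linarith
end

section
/- Let f, g : ℝ → ℝ be continuous functions such that: (1) f and g are even (f(−x) = f(x) and g(−x) = g(x) for all x); (2) f ≥ 0 and g ≥ 0; (3) the open supports {x : f(x) > 0} and {x : g(x) > 0} are disjoint; (4) the open support {x : f(x) > 0} is connected; (5) f and g are integrable with ∫ f(x) dx = ∫ g(x) dx > 0; and (6) x ↦ |x|·f(x) and x ↦ |x|·g(x) are integrable. Then the function φ*(x) = −|x| maximizes ∫ φ(x)(f(x) − g(x)) dx over all 1-Lipschitz functions φ : ℝ → ℝ for which φ·(f − g) is integrable; that is, for every such φ, ∫ φ(x)(f(x) − g(x)) dx ≤ ∫ (−|x|)(f(x) − g(x)) dx. -/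
open MeasureTheory

/-- **Optimality of `−|x|` for symmetric densities with separated supports.**
If `f, g : ℝ → ℝ` are continuous, even, nonnegative, have disjoint open supports,
the open support of `f` is connected, both are integrable with equal positive total
mass, and `|x|·f(x)`, `|x|·g(x)` are integrable, then `φ*(x) = −|x|` maximizes
`∫ φ(x)(f(x) − g(x)) dx` over 1-Lipschitz `φ` with integrable `φ·(f − g)`. -/
theorem neg_abs_optimal_for_symmetric_separated_densities
    (f g : ℝ → ℝ) (hfc : Continuous f) (hgc : Continuous g)
    (hfeven : ∀ x, f (-x) = f x) (hgeven : ∀ x, g (-x) = g x)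
    (hfnonneg : ∀ x, 0 ≤ f x) (hgnonneg : ∀ x, 0 ≤ g x)
    (hdisj : Disjoint {x | 0 < f x} {x | 0 < g x})
    (hconn : IsConnected {x | 0 < f x})
    (hfint : Integrable f) (hgint : Integrable g)
    (heq : ∫ x, f x = ∫ x, g x) (hpos : 0 < ∫ x, f x)
    (hfmom : Integrable (fun x => |x| * f x))
    (hgmom : Integrable (fun x => |x| * g x)) :
    ∀ φ : ℝ → ℝ, LipschitzWith 1 φ →
      Integrable (fun x => φ x * (f x - g x)) →
      ∫ x, φ x * (f x - g x) ≤ ∫ x, (-|x|) * (f x - g x) := by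
  intro φ hφ hint
  have hlip : ∀ x y, φ x - φ y ≤ |x - y| := by
    intro x y
    have h := hφ.dist_le_mul x y
    rw [Real.dist_eq, Real.dist_eq] at h
    have h2 := le_abs_self (φ x - φ y)
    simp only [NNReal.coe_one, one_mul] at h
    linarith
  have hord : ∀ x y, 0 < f x → 0 < g y → |x| ≤ |y| := by
    intro x y hx hy
    by_contra hlt
    push Not at hlt
    have hx' : 0 < f (-x) := by rw [hfeven]; exact hx
    have hoc := hconn.isPreconnected.ordConnected
    have hmem : y ∈ {x | 0 < f x} := by
      obtain ⟨h1, h2⟩ := abs_lt.1 hlt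
      rcases le_total 0 x with h0 | h0
      · rw [abs_of_nonneg h0] at h1 h2
        exact hoc.out (show -x ∈ {x | 0 < f x} from hx') (show x ∈ {x | 0 < f x} from hx)
          ⟨h1.le, h2.le⟩
      · rw [abs_of_nonpos h0] at h1 h2
        exact hoc.out (show x ∈ {x | 0 < f x} from hx) (show -x ∈ {x | 0 < f x} from hx')
          ⟨by linarith, h2.le⟩
    exact Set.disjoint_left.1 hdisj hmem hy
  obtain ⟨u, hu⟩ : ∃ u : ℝ → ℝ, u = fun x => (φ x + φ (-x)) / 2 + |x| := ⟨_, rfl⟩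
  have hmono : ∀ x y, |x| ≤ |y| → u x ≤ u y := by
    intro x y hxy
    have huabs : ∀ z, u z = (φ |z| + φ (-|z|)) / 2 + |z| := by
      intro z
      rw [hu]
      rcases abs_cases z with ⟨h, _⟩ | ⟨h, _⟩
      · simp only [h]
      · simp only [h, neg_neg]; ring
    rw [huabs x, huabs y]
    have h1 := hlip |x| |y|
    have h2 := hlip (-|x|) (-|y|)
    rw [abs_of_nonpos (show |x| - |y| ≤ 0 by linarith)] at h1
    rw [abs_of_nonneg (show 0 ≤ -|x| - -|y| by linarith)] at h2
    linarith
  obtain ⟨y0, hy0⟩ : ∃ y, 0 < g y := by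
    by_contra hne
    push Not at hne
    have : g = fun _ => 0 := funext fun y => le_antisymm (hne y) (hgnonneg y)
    rw [heq, this] at hpos
    simp at hpos
  obtain ⟨x0, hx0⟩ := hconn.nonempty
  obtain ⟨c, hc1, hc2⟩ : ∃ c, (∀ x, 0 < f x → u x ≤ c) ∧ (∀ y, 0 < g y → c ≤ u y) := by
    refine ⟨sSup (u '' {x | 0 < f x}), ?_, ?_⟩
    · intro x hx
      refine le_csSup ⟨u y0, ?_⟩ ⟨x, hx, rfl⟩
      rintro _ ⟨z, hz, rfl⟩
      exact hmono z y0 (hord z y0 hz hy0)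
    · intro y hy
      refine csSup_le ⟨_, x0, hx0, rfl⟩ ?_
      rintro _ ⟨z, hz, rfl⟩
      exact hmono z y (hord z y hz hy)
  have hpt : ∀ x, (u x - c) * (f x - g x) ≤ 0 := by
    intro x
    have hA : (u x - c) * f x ≤ 0 := by
      rcases (hfnonneg x).eq_or_lt with h | h
      · simp [← h]
      · exact mul_nonpos_of_nonpos_of_nonneg (by linarith [hc1 x h]) h.le
    have hB : 0 ≤ (u x - c) * g x := by
      rcases (hgnonneg x).eq_or_lt with h | h
      · simp [← h]
      · exact mul_nonneg (by linarith [hc2 x h]) h.le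
    linarith [mul_sub (u x - c) (f x) (g x)]
  have hint' : Integrable (fun x => φ (-x) * (f x - g x)) := by
    have := hint.comp_neg
    simpa only [hfeven, hgeven] using this
  have hinteq : ∫ x, φ (-x) * (f x - g x) = ∫ x, φ x * (f x - g x) := by
    have := integral_neg_eq_self (fun x => φ x * (f x - g x)) volume
    simpa only [hfeven, hgeven] using this
  have habs : Integrable (fun x => (-|x|) * (f x - g x)) := by
    refine (hgmom.sub hfmom).congr (Filter.Eventually.of_forall fun x => ?_)
    simp only [Pi.sub_apply]; ring
  have hfg : Integrable (fun x => f x - g x) := hfint.sub hgint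
  have hfg0 : ∫ x, (f x - g x) = 0 := by
    rw [integral_sub hfint hgint, heq, sub_self]
  have hle : ∫ x, (u x - c) * (f x - g x) ≤ 0 := integral_nonpos hpt
  have hi1 : Integrable (fun x => φ x * (f x - g x) + φ (-x) * (f x - g x)) := hint.add hint'
  have hi2 : Integrable (fun x => (1 / 2 : ℝ) * (φ x * (f x - g x) + φ (-x) * (f x - g x))) :=
    hi1.const_mul _
  have hi3 : Integrable (fun x => c * (f x - g x)) := hfg.const_mul c
  have hi4 : Integrable (fun x => (1 / 2 : ℝ) * (φ x * (f x - g x) + φ (-x) * (f x - g x))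
      - (-|x|) * (f x - g x)) := hi2.sub habs
  have hdec : (fun x => (u x - c) * (f x - g x)) = fun x =>
      (1 / 2 : ℝ) * (φ x * (f x - g x) + φ (-x) * (f x - g x))
      - (-|x|) * (f x - g x) - c * (f x - g x) := by
    funext x
    rw [hu]; ring
  rw [hdec, integral_sub hi4 hi3, integral_sub hi2 habs, integral_const_mul,
    integral_add hint hint', integral_const_mul, hinteq, hfg0] at hle
  linarith
end

section
/- Let f : ℝⁿ → ℝ be 1-Lipschitz and let x, y, y′ ∈ ℝⁿ satisfy y ≠ x, y′ ≠ x, f(x) − f(y) = ‖x − y‖, f(x) − f(y′) = ‖x − y′‖, and suppose there is no λ > 0 with y − x = λ·(y′ − x). Then f is not differentiable at x. -/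
theorem aux_fderiv {E : Type*} [NormedAddCommGroup E] [NormedSpace ℝ E]
    (f : E → ℝ) (hf : LipschitzWith 1 f) (x y : E) (hxy : f x - f y = ‖x - y‖)
    (hd : DifferentiableAt ℝ f x) : fderiv ℝ f x (y - x) = -‖y - x‖ := by
  have hL : ∀ a b, f a - f b ≤ ‖a - b‖ := fun a b => by
    have h := hf.dist_le_mul a b
    rw [Real.dist_eq, dist_eq_norm] at h
    simp only [NNReal.coe_one, one_mul] at h
    exact (le_abs_self _).trans h
  have hline : HasDerivAt (fun t : ℝ => f (x + t • (y - x))) (fderiv ℝ f x (y - x)) 0 :=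
    hd.hasFDerivAt.hasLineDerivAt (y - x)
  have heq : ∀ t ∈ Set.Icc (0 : ℝ) 1, f (x + t • (y - x)) = f x + t * (-‖y - x‖) := by
    intro t ht
    have h1 := hL x (x + t • (y - x))
    have h2 := hL (x + t • (y - x)) y
    have e1 : ‖x - (x + t • (y - x))‖ = t * ‖y - x‖ := by
      rw [show x - (x + t • (y - x)) = -(t • (y - x)) by abel, norm_neg, norm_smul,
        Real.norm_of_nonneg ht.1]
    have e2 : ‖x + t • (y - x) - y‖ = (1 - t) * ‖y - x‖ := by
      rw [show x + t • (y - x) - y = -((1 - t) • (y - x)) by module, norm_neg, norm_smul,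
        Real.norm_of_nonneg (by linarith [ht.2])]
    rw [norm_sub_rev] at hxy
    rw [e1] at h1
    rw [e2] at h2
    linarith
  have h0 : (0 : ℝ) ∈ Set.Icc (0 : ℝ) 1 := by simp
  have hlin : HasDerivAt (fun t : ℝ => f x + t * (-‖y - x‖)) (-‖y - x‖) 0 := by
    simpa using ((hasDerivAt_id (0 : ℝ)).mul_const (-‖y - x‖)).const_add (f x)
  exact (uniqueDiffOn_Icc_zero_one 0 h0).eq_deriv _ hline.hasDerivWithinAt
    (hlin.hasDerivWithinAt.congr heq (heq 0 h0))

/-- **Non-differentiability at a branching point.** If a 1-Lipschitz `f : ℝⁿ → ℝ`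
realizes the Lipschitz bound with equality from `x` towards two points `y, y′` lying in
genuinely different directions from `x`, then `f` is not differentiable at `x`. -/
theorem not_differentiable_at_branching_point (n : ℕ)
    (f : EuclideanSpace ℝ (Fin n) → ℝ) (hf : LipschitzWith 1 f)
    (x y y' : EuclideanSpace ℝ (Fin n))
    (hy : y ≠ x) (hy' : y' ≠ x)
    (hxy : f x - f y = ‖x - y‖) (hxy' : f x - f y' = ‖x - y'‖)
    (hdir : ¬ ∃ lam : ℝ, 0 < lam ∧ y - x = lam • (y' - x)) :
    ¬ DifferentiableAt ℝ f x := by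
  intro hd
  have h1 := aux_fderiv f hf x y hxy hd
  have h2 := aux_fderiv f hf x y' hxy' hd
  have hn : ‖fderiv ℝ f x‖ ≤ 1 := by simpa using norm_fderiv_le_of_lipschitz ℝ hf (x₀ := x)
  have h3 := (fderiv ℝ f x).le_of_opNorm_le hn ((y - x) + (y' - x))
  rw [map_add, h1, h2, one_mul, Real.norm_eq_abs] at h3
  have h4 := (neg_le_abs _).trans h3
  have hs : SameRay ℝ (y' - x) (y - x) := by
    refine (sameRay_iff_norm_add.2 (le_antisymm (norm_add_le _ _) ?_)).symm
    linarith
  obtain ⟨r, hr, h⟩ := hs.exists_nonneg_left (sub_ne_zero.2 hy')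
  refine hdir ⟨r, lt_of_le_of_ne hr ?_, h.symm⟩
  rintro rfl
  rw [zero_smul] at h
  exact sub_ne_zero.2 hy h.symm
end

section
/- Let μ and ν be probability measures on ℝⁿ with finite first moments, let f* : ℝⁿ → ℝ be a 1-Lipschitz function maximizing ∫ f dμ − ∫ f dν over all 1-Lipschitz f, and let π* be a coupling of μ and ν minimizing ∫‖x−y‖ dπ. Then for π*-almost every pair (x, y) and every t ∈ [0,1], with x_t = t·x + (1−t)·y, one has f*(x_t) − f*(y) = t·‖x − y‖ and f*(x) − f*(x_t) = (1−t)·‖x − y‖; in particular |f*(x_t) − f*(y)| = ‖x_t − y‖ for all points x_t on the segment between coupled points. -/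
open MeasureTheory

section Helpers

variable {E : Type*} [NormedAddCommGroup E] [MeasurableSpace E] [BorelSpace E]
  [SecondCountableTopology E]

/-- Support of an optimal plan is cyclically monotone. -/
lemma ot_cyclic (μ ν : Measure E) [IsProbabilityMeasure μ] (πs : Measure (E × E))
    [IsProbabilityMeasure πs] (hint : Integrable (fun p : E × E => ‖p.1 - p.2‖) πs)
    (hπ₁ : πs.map Prod.fst = μ) (hπ₂ : πs.map Prod.snd = ν)
    (hπopt : ∀ π : Measure (E × E),
        IsProbabilityMeasure π → π.map Prod.fst = μ → π.map Prod.snd = ν →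
          ∫ p, ‖p.1 - p.2‖ ∂πs ≤ ∫ p, ‖p.1 - p.2‖ ∂π)
    (m : ℕ) (p : Fin (m + 1) → E × E) (hp : ∀ i, p i ∈ πs.support)
    (σ : Equiv.Perm (Fin (m + 1))) :
    ∑ i, ‖(p i).1 - (p i).2‖ ≤ ∑ i, ‖(p (σ i)).1 - (p i).2‖ := by
  by_contra! hlt
  set A := ∑ i, ‖(p i).1 - (p i).2‖ with hA
  set B := ∑ i, ‖(p (σ i)).1 - (p i).2‖ with hB
  have hN : (0 : ℝ) < (m : ℝ) + 1 := by positivity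
  set r : ℝ := (A - B) / (8 * ((m : ℝ) + 1)) with hr
  have hrpos : 0 < r := by
    apply div_pos <;> linarith
  have hr8 : 8 * (((m : ℝ) + 1) * r) = A - B := by rw [hr]; field_simp
  set W : Fin (m + 1) → Set (E × E) := fun i => Metric.ball (p i) r with hW
  have hWm : ∀ i, MeasurableSet (W i) := fun i => Metric.isOpen_ball.measurableSet
  have hWpos : ∀ i, πs (W i) ≠ 0 := fun i =>
    ((Measure.mem_support_iff_forall _).1 (hp i) _ (Metric.ball_mem_nhds _ hrpos)).ne'
  set ρ : Fin (m + 1) → Measure (E × E) := fun i => ProbabilityTheory.cond πs (W i) with hρ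
  have hρp : ∀ i, IsProbabilityMeasure (ρ i) := fun i =>
    ProbabilityTheory.cond_isProbabilityMeasure (hWpos i)
  have hρae : ∀ i, ∀ᵐ q ∂(ρ i), q ∈ W i := fun i =>
    ProbabilityTheory.ae_cond_mem (hWm i)
  obtain ⟨j, hj⟩ := Finite.exists_min (fun i => πs (W i))
  have hcast : ((m + 1 : ℕ) : ENNReal) ≠ 0 := by simp
  have hcast' : ((m + 1 : ℕ) : ENNReal) ≠ ⊤ := ENNReal.natCast_ne_top _
  set ε : ENNReal := ((m + 1 : ℕ) : ENNReal)⁻¹ * πs (W j) with hε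
  have hε0 : ε ≠ 0 := mul_ne_zero (ENNReal.inv_ne_zero.2 hcast') (hWpos j)
  have hεt : ε ≠ ⊤ := ENNReal.mul_ne_top (ENNReal.inv_ne_top.2 hcast) (measure_ne_top _ _)
  have hεr : 0 < ε.toReal := ENNReal.toReal_pos hε0 hεt
  have hle1 : ∀ i (s : Set (E × E)), ε * ρ i s ≤ ((m + 1 : ℕ) : ENNReal)⁻¹ * πs s := by
    intro i s
    rw [hε, mul_assoc]
    gcongr
    have : ρ i s = (πs (W i))⁻¹ * πs.restrict (W i) s := by
      simp [hρ, ProbabilityTheory.cond]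
    rw [this, ← mul_assoc]
    calc πs (W j) * (πs (W i))⁻¹ * πs.restrict (W i) s
        ≤ πs (W i) * (πs (W i))⁻¹ * πs s := by
          exact mul_le_mul' (mul_le_mul' (hj i) le_rfl) (Measure.restrict_apply_le _ _)
      _ = πs s := by rw [ENNReal.mul_inv_cancel (hWpos i) (measure_ne_top _ _), one_mul]
  have hle : ε • ∑ i, ρ i ≤ πs := by
    refine Measure.le_iff.2 fun s hs => ?_
    rw [Measure.smul_apply, Measure.finsetSum_apply, smul_eq_mul, Finset.mul_sum]
    calc ∑ i, ε * ρ i s ≤ ∑ i : Fin (m + 1), ((m + 1 : ℕ) : ENNReal)⁻¹ * πs s :=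
          Finset.sum_le_sum fun i _ => hle1 i s
      _ = πs s := by
          rw [Finset.sum_const, Finset.card_univ, Fintype.card_fin, nsmul_eq_mul, ← mul_assoc,
            ENNReal.mul_inv_cancel hcast hcast', one_mul]
  have hfin : IsFiniteMeasure (ε • ∑ i, ρ i) := isFiniteMeasure_of_le πs hle
  set R := πs - ε • ∑ i, ρ i with hR
  have hRadd : R + ε • ∑ i, ρ i = πs := Measure.sub_add_cancel_of_le hle
  set T : (E × E) × (E × E) → E × E := fun z => (z.1.1, z.2.2) with hT
  have hTm : Measurable T := by fun_prop
  set η : Fin (m + 1) → Measure (E × E) := fun i => ((ρ (σ i)).prod (ρ i)).map T with hη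
  have hηp : ∀ i, IsProbabilityMeasure (η i) := fun i =>
    Measure.isProbabilityMeasure_map hTm.aemeasurable
  have hη1 : ∀ i, (η i).map Prod.fst = (ρ (σ i)).map Prod.fst := by
    intro i
    have h1 : ((ρ (σ i)).prod (ρ i)).map Prod.fst = ρ (σ i) := by simp
    conv_rhs => rw [← h1]
    rw [hη, Measure.map_map measurable_fst hTm, Measure.map_map measurable_fst measurable_fst]
    rfl
  have hη2 : ∀ i, (η i).map Prod.snd = (ρ i).map Prod.snd := by
    intro i
    have h1 : ((ρ (σ i)).prod (ρ i)).map Prod.snd = ρ i := by simp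
    conv_rhs => rw [← h1]
    rw [hη, Measure.map_map measurable_snd hTm, Measure.map_map measurable_snd measurable_snd]
    rfl
  have hηae : ∀ i, ∀ᵐ q ∂(η i), ‖q.1 - q.2‖ ≤ ‖(p (σ i)).1 - (p i).2‖ + 2 * r := by
    intro i
    have hms : MeasurableSet {q : E × E | ‖q.1 - q.2‖ ≤ ‖(p (σ i)).1 - (p i).2‖ + 2 * r} :=
      measurableSet_le (by fun_prop) measurable_const
    rw [hη, ae_map_iff hTm.aemeasurable hms]
    filter_upwards [Measure.quasiMeasurePreserving_fst.ae (hρae (σ i)),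
      Measure.quasiMeasurePreserving_snd.ae (hρae i)] with z h1 h2
    simp only [hW, Metric.mem_ball, dist_eq_norm, Prod.norm_def, max_lt_iff,
      Prod.fst_sub, Prod.snd_sub] at h1 h2
    have e : z.1.1 - z.2.2 = (z.1.1 - (p (σ i)).1) + ((p (σ i)).1 - (p i).2)
        - (z.2.2 - (p i).2) := by abel
    simp only [hT]
    rw [e]
    have := norm_sub_le ((z.1.1 - (p (σ i)).1) + ((p (σ i)).1 - (p i).2)) (z.2.2 - (p i).2)
    have := norm_add_le (z.1.1 - (p (σ i)).1) ((p (σ i)).1 - (p i).2)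
    linarith [h1.1, h2.2]
  have hρge : ∀ i, ∀ᵐ q ∂(ρ i), ‖(p i).1 - (p i).2‖ - 2 * r ≤ ‖q.1 - q.2‖ := by
    intro i
    filter_upwards [hρae i] with z h1
    simp only [hW, Metric.mem_ball, dist_eq_norm, Prod.norm_def, max_lt_iff,
      Prod.fst_sub, Prod.snd_sub] at h1
    have e : (p i).1 - (p i).2 = (z.1 - z.2) - (z.1 - (p i).1) + (z.2 - (p i).2) := by abel
    have h3 := norm_add_le ((z.1 - z.2) - (z.1 - (p i).1)) (z.2 - (p i).2)
    have := norm_sub_le (z.1 - z.2) (z.1 - (p i).1)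
    rw [← e] at h3
    linarith [h1.1, h1.2]
  have hintη : ∀ i, Integrable (fun q : E × E => ‖q.1 - q.2‖) (η i) := by
    intro i
    refine Integrable.of_bound (by fun_prop) (‖(p (σ i)).1 - (p i).2‖ + 2 * r) ?_
    filter_upwards [hηae i] with q hq
    simpa using hq
  have hintR : Integrable (fun q : E × E => ‖q.1 - q.2‖) R :=
    hint.mono_measure (by rw [← hRadd]; exact Measure.le_add_right le_rfl)
  have hintS : Integrable (fun q : E × E => ‖q.1 - q.2‖) (ε • ∑ i, ρ i) :=
    hint.mono_measure hle
  have hintρ : ∀ i, Integrable (fun q : E × E => ‖q.1 - q.2‖) (ρ i) := fun i =>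
    (integrable_finsetSum_measure.1 ((integrable_smul_measure hε0 hεt).1 hintS)) i
      (Finset.mem_univ i)
  have hintS' : Integrable (fun q : E × E => ‖q.1 - q.2‖) (ε • ∑ i, η i) :=
    (integrable_smul_measure hε0 hεt).2 (integrable_finsetSum_measure.2 fun i _ => hintη i)
  have hm1 : (R + ε • ∑ i, η i).map Prod.fst = μ := by
    rw [← hπ₁, ← hRadd, Measure.map_add _ _ measurable_fst, Measure.map_add _ _ measurable_fst,
      Measure.map_smul, Measure.map_smul, Measure.map_finset_sum' measurable_fst.aemeasurable,
      Measure.map_finset_sum' measurable_fst.aemeasurable]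
    simp only [hη1]
    rw [Equiv.sum_comp σ (fun i => (ρ i).map Prod.fst)]
  have hm2 : (R + ε • ∑ i, η i).map Prod.snd = ν := by
    rw [← hπ₂, ← hRadd, Measure.map_add _ _ measurable_snd, Measure.map_add _ _ measurable_snd,
      Measure.map_smul, Measure.map_smul, Measure.map_finset_sum' measurable_snd.aemeasurable,
      Measure.map_finset_sum' measurable_snd.aemeasurable]
    simp only [hη2]
  have hprob : IsProbabilityMeasure (R + ε • ∑ i, η i) := by
    constructor
    have : (R + ε • ∑ i, η i).map Prod.fst Set.univ = 1 := by rw [hm1]; simp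
    rwa [Measure.map_apply measurable_fst MeasurableSet.univ] at this
  have key := hπopt _ hprob hm1 hm2
  rw [integral_add_measure hintR hintS', integral_smul_measure,
    integral_finsetSum_measure (fun i _ => hintη i)] at key
  have e : ∫ q, ‖q.1 - q.2‖ ∂πs = ∫ q, ‖q.1 - q.2‖ ∂(R) + ε.toReal • ∑ i, ∫ q, ‖q.1 - q.2‖ ∂(ρ i) := by
    rw [← integral_finsetSum_measure (fun i _ => hintρ i), ← integral_smul_measure,
      ← integral_add_measure hintR hintS, hRadd]
  rw [e, add_le_add_iff_left, smul_eq_mul, smul_eq_mul, mul_le_mul_iff_right₀ hεr] at key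
  have k1 : ∑ i, ∫ q, ‖q.1 - q.2‖ ∂(η i) ≤ ∑ i, (‖(p (σ i)).1 - (p i).2‖ + 2 * r) := by
    refine Finset.sum_le_sum fun i _ => ?_
    have := integral_mono_ae (hintη i) (integrable_const _) (hηae i)
    simpa using this
  have k2 : ∑ i, (‖(p i).1 - (p i).2‖ - 2 * r) ≤ ∑ i, ∫ q, ‖q.1 - q.2‖ ∂(ρ i) := by
    refine Finset.sum_le_sum fun i _ => ?_
    have := integral_mono_ae (integrable_const _) (hintρ i) (hρge i)
    simpa using this
  rw [Finset.sum_add_distrib] at k1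
  rw [Finset.sum_sub_distrib] at k2
  simp only [Finset.sum_const, Finset.card_univ, Fintype.card_fin, nsmul_eq_mul,
    Nat.cast_add, Nat.cast_one] at k1 k2
  nlinarith [mul_pos hN hrpos]

/-- A set that is cyclically monotone for the distance admits a Kantorovich potential. -/
lemma ot_potential (S : Set (E × E))
    (hS : ∀ (m : ℕ) (p : Fin (m + 1) → E × E), (∀ i, p i ∈ S) →
      ∀ σ : Equiv.Perm (Fin (m + 1)),
      ∑ i, ‖(p i).1 - (p i).2‖ ≤ ∑ i, ‖(p (σ i)).1 - (p i).2‖) :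
    ∃ g : E → ℝ, LipschitzWith 1 g ∧ ∀ q ∈ S, ‖q.1 - q.2‖ ≤ g q.1 - g q.2 := by
  let I := {c : ℕ × (ℕ → E × E) // (∀ i < c.1, c.2 i ∈ S) ∧ (c.2 c.1).1 = 0}
  let F : E → I → ℝ := fun z c => ‖z - (c.1.2 0).1‖ +
    ∑ i ∈ Finset.range c.1.1, (‖(c.1.2 i).2 - (c.1.2 (i + 1)).1‖ - ‖(c.1.2 i).1 - (c.1.2 i).2‖)
  have hI : Nonempty I := ⟨⟨(0, fun _ => (0, 0)), by simp, rfl⟩⟩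
  have hbd : ∀ z c, -‖z‖ ≤ F z c := by
    rintro z ⟨⟨n, q⟩, h1, h2⟩
    simp only [F]
    simp only at h1 h2
    rcases n with _ | m
    · simp; linarith [norm_nonneg z, norm_nonneg (z - (q 0).1)]
    · have := hS m (fun i => q i) (fun i => h1 i i.2) (finRotate (m + 1))
      rw [Fin.sum_univ_castSucc (fun i : Fin (m+1) => ‖(q (finRotate (m + 1) i)).1 - (q i).2‖)] at this
      simp only [finRotate_last, finRotate_succ_apply, Fin.coeSucc_eq_succ, Fin.val_succ,
        Fin.val_castSucc, Fin.val_last, Fin.val_zero] at this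
      rw [Fin.sum_univ_eq_sum_range (fun i => ‖(q i).1 - (q i).2‖) (m + 1),
        Fin.sum_univ_eq_sum_range (fun i => ‖(q (i + 1)).1 - (q i).2‖) m] at this
      rw [Finset.sum_sub_distrib, Finset.sum_range_succ (fun i => ‖(q i).2 - (q (i + 1)).1‖), h2]
      simp only [norm_sub_rev (q (_ + 1)).1] at this
      have t1 : ‖(q 0).1 - (q m).2‖ ≤ ‖z - (q 0).1‖ + ‖z‖ + ‖(q m).2 - 0‖ := by
        have e : (q 0).1 - (q m).2 = z - (z - (q 0).1) - ((q m).2 - 0) := by abel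
        rw [e]
        have := norm_sub_le (z - (z - (q 0).1)) ((q m).2 - 0)
        have := norm_sub_le z (z - (q 0).1)
        linarith
      have e0 : Fin.last m + 1 = 0 := by simp
      simp only [e0, Fin.val_zero] at this
      linarith
  have hbdd : ∀ z, BddBelow (Set.range (F z)) := fun z =>
    ⟨-‖z‖, by rintro _ ⟨c, rfl⟩; exact hbd z c⟩
  refine ⟨fun z => -⨅ c, F z c, ?_, ?_⟩
  · refine LipschitzWith.of_le_add_mul 1 fun a b => ?_
    have : (⨅ c, F b c) - ‖a - b‖ ≤ ⨅ c, F a c := by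
      refine le_ciInf fun c => ?_
      have h1 := ciInf_le (hbdd b) c
      have h2 : F b c ≤ F a c + ‖a - b‖ := by
        simp only [F]
        have e : b - (c.1.2 0).1 = (a - (c.1.2 0).1) - (a - b) := by abel
        have := norm_sub_le (a - (c.1.2 0).1) (a - b)
        rw [← e] at this
        linarith
      linarith
    simp only [dist_eq_norm, NNReal.coe_one, one_mul]
    linarith
  · intro q hq
    have : (⨅ c, F q.1 c) + ‖q.1 - q.2‖ ≤ ⨅ c, F q.2 c := by
      refine le_ciInf fun c => ?_
      obtain ⟨⟨n, s⟩, h1, h2⟩ := c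
      simp only at h1 h2
      let s' : ℕ → E × E := fun i => Nat.casesOn i q s
      have h1' : ∀ i < n + 1, s' i ∈ S := by
        intro i hi
        rcases i with _ | i
        · exact hq
        · exact h1 i (by omega)
      have h := ciInf_le (hbdd q.1) ⟨(n + 1, s'), h1', h2⟩
      simp only [F] at h ⊢
      rw [Finset.sum_range_succ'] at h
      have e0 : s' 0 = q := rfl
      have e1 : ∀ i, s' (i + 1) = s i := fun _ => rfl
      simp only [e0, e1, sub_self, norm_zero] at h
      linarith
    linarith

end Helpers

/-- **The optimal critic has unit slope along segments between optimally coupled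
points.** For `π*`-almost every `(x, y)` and every `t ∈ [0,1]`, with
`x_t = t·x + (1−t)·y`, one has `f*(x_t) − f*(y) = t·‖x − y‖` and
`f*(x) − f*(x_t) = (1−t)·‖x − y‖`; in particular `|f*(x_t) − f*(y)| = ‖x_t − y‖`. -/
theorem optimal_critic_unit_slope_on_coupled_segments (n : ℕ)
    (μ ν : Measure (EuclideanSpace ℝ (Fin n)))
    [IsProbabilityMeasure μ] [IsProbabilityMeasure ν]
    (hμ : Integrable (fun x => ‖x‖) μ) (hν : Integrable (fun x => ‖x‖) ν)
    (f : EuclideanSpace ℝ (Fin n) → ℝ) (hf : LipschitzWith 1 f)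
    (hfopt : ∀ g : EuclideanSpace ℝ (Fin n) → ℝ, LipschitzWith 1 g →
        ∫ x, g x ∂μ - ∫ x, g x ∂ν ≤ ∫ x, f x ∂μ - ∫ x, f x ∂ν)
    (πs : Measure (EuclideanSpace ℝ (Fin n) × EuclideanSpace ℝ (Fin n)))
    [IsProbabilityMeasure πs]
    (hπ₁ : πs.map Prod.fst = μ) (hπ₂ : πs.map Prod.snd = ν)
    (hπopt : ∀ π : Measure (EuclideanSpace ℝ (Fin n) × EuclideanSpace ℝ (Fin n)),
        IsProbabilityMeasure π → π.map Prod.fst = μ → π.map Prod.snd = ν →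
          ∫ p, ‖p.1 - p.2‖ ∂πs ≤ ∫ p, ‖p.1 - p.2‖ ∂π) :
    ∀ᵐ p ∂πs, ∀ t ∈ Set.Icc (0 : ℝ) 1,
      f (t • p.1 + (1 - t) • p.2) - f p.2 = t * ‖p.1 - p.2‖ ∧
      f p.1 - f (t • p.1 + (1 - t) • p.2) = (1 - t) * ‖p.1 - p.2‖ ∧
      |f (t • p.1 + (1 - t) • p.2) - f p.2| = ‖(t • p.1 + (1 - t) • p.2) - p.2‖ := by
  have hi1 : ∀ g : EuclideanSpace ℝ (Fin n) → ℝ, LipschitzWith 1 g →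
      Integrable g μ ∧ Integrable g ν := by
    intro g hg
    have hb : ∀ x, ‖g x‖ ≤ ‖(‖x‖ + ‖g 0‖ : ℝ)‖ := by
      intro x
      have h1 := hg.norm_sub_le x 0
      have h2 := norm_sub_norm_le (g x) (g 0)
      rw [Real.norm_of_nonneg (by positivity : (0:ℝ) ≤ ‖x‖ + ‖g 0‖)]
      simp only [NNReal.coe_one, one_mul, sub_zero] at h1
      linarith
    exact ⟨(hμ.add (integrable_const ‖g 0‖)).mono hg.continuous.aestronglyMeasurable
        (Filter.Eventually.of_forall hb),
      (hν.add (integrable_const ‖g 0‖)).mono hg.continuous.aestronglyMeasurable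
        (Filter.Eventually.of_forall hb)⟩
  have hc1 : ∀ g : EuclideanSpace ℝ (Fin n) → ℝ, Integrable g μ →
      Integrable (fun p : EuclideanSpace ℝ (Fin n) × EuclideanSpace ℝ (Fin n) => g p.1) πs := by
    intro g hg
    rw [← hπ₁] at hg
    exact hg.comp_measurable measurable_fst
  have hc2 : ∀ g : EuclideanSpace ℝ (Fin n) → ℝ, Integrable g ν →
      Integrable (fun p : EuclideanSpace ℝ (Fin n) × EuclideanSpace ℝ (Fin n) => g p.2) πs := by
    intro g hg
    rw [← hπ₂] at hg
    exact hg.comp_measurable measurable_snd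
  have hdiff : ∀ g : EuclideanSpace ℝ (Fin n) → ℝ, LipschitzWith 1 g →
      ∫ x, g x ∂μ - ∫ x, g x ∂ν = ∫ p, (g p.1 - g p.2) ∂πs := by
    intro g hg
    rw [integral_sub (hc1 g (hi1 g hg).1) (hc2 g (hi1 g hg).2), ← hπ₁, ← hπ₂,
      integral_map measurable_fst.aemeasurable hg.continuous.aestronglyMeasurable,
      integral_map measurable_snd.aemeasurable hg.continuous.aestronglyMeasurable]
  have hint : Integrable (fun p : EuclideanSpace ℝ (Fin n) × EuclideanSpace ℝ (Fin n) =>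
      ‖p.1 - p.2‖) πs := by
    refine ((hc1 _ hμ).add (hc2 _ hν)).mono (by fun_prop) (Filter.Eventually.of_forall ?_)
    intro p
    have := norm_sub_le p.1 p.2
    simp only [norm_norm, Pi.add_apply]
    rwa [Real.norm_of_nonneg (by positivity)]
  obtain ⟨g, hg, hgS⟩ := ot_potential πs.support
    (ot_cyclic μ ν πs hint hπ₁ hπ₂ hπopt)
  have hlip : ∀ a b, f a - f b ≤ ‖a - b‖ := by
    intro a b
    have := hf.norm_sub_le a b
    simp only [NNReal.coe_one, one_mul] at this
    exact (le_abs_self _).trans this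
  have hintf : Integrable (fun p : EuclideanSpace ℝ (Fin n) × EuclideanSpace ℝ (Fin n) =>
      f p.1 - f p.2) πs := (hc1 f (hi1 f hf).1).sub (hc2 f (hi1 f hf).2)
  have hintg : Integrable (fun p : EuclideanSpace ℝ (Fin n) × EuclideanSpace ℝ (Fin n) =>
      g p.1 - g p.2) πs := (hc1 g (hi1 g hg).1).sub (hc2 g (hi1 g hg).2)
  have hgf := hfopt g hg
  rw [hdiff g hg, hdiff f hf] at hgf
  have hcg : ∫ p, ‖p.1 - p.2‖ ∂πs ≤ ∫ p, (g p.1 - g p.2) ∂πs := by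
    refine integral_mono_ae hint hintg ?_
    filter_upwards [Measure.support_mem_ae (μ := πs)] with p hp using hgS p hp
  have hfc : ∫ p, (f p.1 - f p.2) ∂πs ≤ ∫ p, ‖p.1 - p.2‖ ∂πs :=
    integral_mono hintf hint fun p => hlip _ _
  have hae := (integral_eq_iff_of_ae_le hintf hint
    (Filter.Eventually.of_forall fun p => hlip _ _)).1 (by linarith)
  filter_upwards [hae] with p hp t ht
  have hp' : f p.1 - f p.2 = ‖p.1 - p.2‖ := hp
  have e1 : (t • p.1 + (1 - t) • p.2) - p.2 = t • (p.1 - p.2) := by module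
  have e2 : p.1 - (t • p.1 + (1 - t) • p.2) = (1 - t) • (p.1 - p.2) := by module
  have l1 := hlip (t • p.1 + (1 - t) • p.2) p.2
  have l2 := hlip p.1 (t • p.1 + (1 - t) • p.2)
  rw [e1, norm_smul, Real.norm_of_nonneg ht.1] at l1
  rw [e2, norm_smul, Real.norm_of_nonneg (by linarith [ht.2])] at l2
  have r1 : f (t • p.1 + (1 - t) • p.2) - f p.2 = t * ‖p.1 - p.2‖ := by linarith
  refine ⟨r1, by linarith, ?_⟩
  rw [e1, r1, norm_smul, Real.norm_of_nonneg ht.1, abs_of_nonneg]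
  exact mul_nonneg ht.1 (norm_nonneg _)
end
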